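/- arXiv:1909.07206 — 4 statements merged into one kernel-verified Lean document; each statement's English description precedes it below -/
import Mathlib

section
/- Let n ≥ 1 and let w be a permutation of [n]. Then the coefficient-wise inequalities Min_w(x) ≤ S_w(x) ≤ Max_w(x) hold in ℤ[x_1,…,x_n]; that is, for every monomial x^β, the coefficient of x^β in S_w(x) is at least 1 if there exists a diagram C ≤ D(w) with x^C = x^β, and the coefficient of x^β in S_w(x) is at most the number of diagrams C ≤ D(w) with x^C = x^β. -/
open MvPolynomial

/-- Gale order: `C ≤ D` iff same cardinality and for each `k`, the `k`-th least element of `C`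
is at most the `k`-th least element of `D`. -/
def GaleLE {n : ℕ} (C D : Finset (Fin n)) : Prop :=
  C.card = D.card ∧ ∀ (k : ℕ) (hC : k < C.card) (hD : k < D.card),
    (C.orderIsoOfFin rfl ⟨k, hC⟩ : Fin n) ≤ (D.orderIsoOfFin rfl ⟨k, hD⟩ : Fin n)

/-- `C ≤ D` for diagrams: columnwise Gale order. -/
def DiagramLE {n : ℕ} (C D : Fin n → Finset (Fin n)) : Prop := ∀ j, GaleLE (C j) (D j)

/-- The Rothe diagram of a permutation `w` (0-indexed): column `j` consists of the rows `i`
with `w i > j` and `i < w⁻¹ j`. -/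
def rothe {n : ℕ} (w : Equiv.Perm (Fin n)) (j : Fin n) : Finset (Fin n) :=
  Finset.univ.filter fun i => j < w i ∧ i < w.symm j

/-- The monomial `x^C = ∏_j ∏_{i ∈ C_j} x_i` of a diagram `C`. -/
noncomputable def xDiagram {n : ℕ} (C : Fin n → Finset (Fin n)) : MvPolynomial (Fin n) ℤ :=
  ∏ j, ∏ i ∈ C j, X i

/- `Max_D(x) = ∑_{C ≤ D} x^C`, summed over all diagrams `C` with `C ≤ D`. -/
open scoped Classical in
noncomputable def MaxPoly {n : ℕ} (D : Fin n → Finset (Fin n)) : MvPolynomial (Fin n) ℤ :=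
  ∑ C ∈ Finset.univ.filter (fun C : Fin n → Finset (Fin n) => DiagramLE C D), xDiagram C

/-- `S` is the family of Schubert polynomials: `S_{w₀} = x_1^{n-1} ⋯ x_{n-1}` for the longest
permutation `w₀` (i.e. `Fin.revPerm`), and whenever `w_i < w_{i+1}`,
`S_w = ∂_i S_{w s_i}`, expressed denominator-free as
`(x_i - x_{i+1}) S_w = S_{w s_i} - s_i · S_{w s_i}`. -/
def IsSchubertFamily {n : ℕ} (S : Equiv.Perm (Fin n) → MvPolynomial (Fin n) ℤ) : Prop :=
  S Fin.revPerm = (∏ i : Fin n, X i ^ (n - 1 - (i : ℕ))) ∧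
  ∀ (w : Equiv.Perm (Fin n)) (i j : Fin n), (i : ℕ) + 1 = (j : ℕ) → w i < w j →
    (X i - X j) * S w =
      S (w * Equiv.swap i j) - rename (Equiv.swap i j) (S (w * Equiv.swap i j))

/-- `w` contains the pattern `π`: there is a strictly increasing choice of positions on which
`w` is order isomorphic to `π`. -/
def ContainsPattern {n m : ℕ} (w : Equiv.Perm (Fin n)) (π : Fin m → ℕ) : Prop :=
  ∃ f : Fin m ↪o Fin n, ∀ s t : Fin m, π s < π t ↔ w (f s) < w (f t)

/-- `w` avoids the pattern `π`. -/
def AvoidsPattern {n m : ℕ} (w : Equiv.Perm (Fin n)) (π : Fin m → ℕ) : Prop :=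
  ¬ ContainsPattern w π

/-!
Fomin and Stanley write the Schubert polynomials as the coefficients of the product, over
`k = 0, 1, …`, of the blocks `h_{n-2}(x_k) ⋯ h_{k+1}(x_k) h_k(x_k)` with `h_i(x) = 1 + x u_i`, in
the nilCoxeter algebra with generators `u_i`: the Yang–Baxter equation gives the recursion by
divided differences, and the recursion determines the family.

Apply these factors one at a time, starting from the rightmost one. On the coefficient at `w`, the
factor `h_a(x_k)` adds `x_k` times the coefficient at `s_a w` if the values `a` and `b = a + 1` form
a descent of `w`, and `D(s_a w)` arises from `D(w)` by removing a box of column `a` and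
interchanging the columns `a` and `b`. So count only those diagrams `C ≤ D(w)` that have their boxes
in the rows from `k` on, and in row `k` only in the columns that the factors applied so far account
for. Inserting a box in row `k` and interchanging the columns is injective, which bounds the
coefficients from above. For the lower bound, invert this operation on a diagram with a box in
row `k` of column `a`. The result can fail to lie below `D(s_a w)` only if the counting functions of
the columns `a` and `b` cross, and then exchanging the upper parts of these columns moves the box
to column `b` without changing the monomial; a later factor accounts for such a diagram.
-/

section NilCoxeter

variable {R A : Type*} [CommRing R] [Ring A] [Algebra R A]

/-- The relations of the nilCoxeter algebra of the symmetric group, for a sequence of elements of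
a ring. -/
structure NilCoxeter (u : ℕ → A) : Prop where
  sq_eq_zero : ∀ i, u i * u i = 0
  commute : ∀ i j, i + 2 ≤ j → Commute (u i) (u j)
  braid : ∀ i, u i * u (i + 1) * u i = u (i + 1) * u i * u (i + 1)

/-- The Yang–Baxter element `h_i(x) = 1 + x u_i` of Fomin and Stanley. -/
def nilFactor (u : ℕ → A) (i : ℕ) (x : R) : A := 1 + x • u i

/-- The product `h_{k+l-1}(x) ⋯ h_{k+1}(x) h_k(x)` of `l` factors. -/
def descProd (u : ℕ → A) (x : R) (k : ℕ) : ℕ → A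
  | 0 => 1
  | l + 1 => nilFactor u (k + l) x * descProd u x k l

/-- The product, over `i = k, …, k + l - 1` from left to right, of the descending products
`h_{m-1}(z_i) ⋯ h_i(z_i)`. For `k = 0` and `l = m` its expansion in the nilCoxeter algebra has the
Schubert polynomials as coefficients. -/
def schubertProd (u : ℕ → A) (z : ℕ → R) (m : ℕ) : ℕ → ℕ → A
  | _, 0 => 1
  | k, l + 1 => descProd u (z k) k (m - k) * schubertProd u z m (k + 1) l

theorem descProd_eq_mul_nilFactor (u : ℕ → A) (x : R) (k l : ℕ) :
    descProd u x k (l + 1) = descProd u x (k + 1) l * nilFactor u k x := by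
  induction l with
  | zero => simp [descProd]
  | succ l ih => rw [descProd, ih, descProd, mul_assoc, Nat.succ_add_eq_add_succ]

theorem schubertProd_congr (u : ℕ → A) {z z' : ℕ → R} (m : ℕ) {k : ℕ} (l : ℕ)
    (h : ∀ i, k ≤ i → z i = z' i) : schubertProd u z m k l = schubertProd u z' m k l := by
  induction l generalizing k with
  | zero => rfl
  | succ l ih => rw [schubertProd, schubertProd, h k le_rfl, ih fun i hi => h i (by omega)]

section Commute

variable {u : ℕ → A} {a : A} {k : ℕ}

theorem commute_nilFactor {i : ℕ} (h : Commute a (u i)) (x : R) : Commute a (nilFactor u i x) :=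
  (Commute.one_right a).add_right (h.smul_right x)

theorem commute_descProd (h : ∀ i, k ≤ i → Commute a (u i)) (x : R) (l : ℕ) :
    Commute a (descProd u x k l) := by
  induction l with
  | zero => exact Commute.one_right a
  | succ l ih => exact (commute_nilFactor (h _ (by omega)) x).mul_right ih

theorem commute_schubertProd (h : ∀ i, k ≤ i → Commute a (u i)) (z : ℕ → R) (m l : ℕ) :
    Commute a (schubertProd u z m k l) := by
  induction l generalizing k with
  | zero => exact Commute.one_right a
  | succ l ih => exact (commute_descProd h _ _).mul_right (ih fun i hi => h i (by omega))

end Commute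

namespace NilCoxeter

variable {u : ℕ → A} (hu : NilCoxeter u)
include hu

theorem nilFactor_mul_neg (i : ℕ) (x : R) : nilFactor u i x * nilFactor u i (-x) = 1 := by
  simp [nilFactor, mul_add, add_mul, hu.sq_eq_zero]

theorem nilFactor_mul_self (i : ℕ) (x : R) : nilFactor u i x * u i = u i := by
  simp [nilFactor, add_mul, hu.sq_eq_zero]

/-- The Yang–Baxter equation: the right side is symmetric in `x` and `y`. -/
theorem nilFactor_conj (k : ℕ) (x y : R) :
    nilFactor u (k + 1) (-y) * nilFactor u k x * nilFactor u (k + 1) y * nilFactor u k y =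
      1 + (x + y) • u k + (x * y) • (u k * u (k + 1) - u (k + 1) * u k) := by
  have sq := hu.sq_eq_zero k
  have braid := hu.braid k
  have zero_left : u (k + 1) * u k * u k = 0 := by rw [mul_assoc, sq, mul_zero]
  have zero_right : u (k + 1) * u k * u (k + 1) * u k = 0 := by
    rw [← braid, mul_assoc, sq, mul_zero]
  have conj : nilFactor u (k + 1) (-y) * nilFactor u k x * nilFactor u (k + 1) y =
      1 + x • u k + (x * y) • (u k * u (k + 1) - u (k + 1) * u k)
        - (x * y * y) • (u (k + 1) * u k * u (k + 1)) := by
    simp only [nilFactor, mul_add, add_mul, mul_one, one_mul, mul_smul_comm, smul_mul_assoc,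
      hu.sq_eq_zero (k + 1), smul_zero]
    module
  rw [conj]
  simp only [nilFactor, mul_add, add_mul, sub_mul, mul_one, mul_smul_comm, smul_mul_assoc, one_mul,
    sq, zero_left, zero_right, braid, smul_zero]
  module

theorem descProd_mul_descProd (x y : R) (k l : ℕ) :
    descProd u x k (l + 2) * descProd u y k (l + 2) =
      descProd u x (k + 1) (l + 1) * descProd u y (k + 1) (l + 1) *
        (1 + (x + y) • u k + (x * y) • (u k * u (k + 1) - u (k + 1) * u k)) := by
  have hcomm : Commute (nilFactor u k x) (descProd u y (k + 2) l) :=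
    commute_descProd (fun i hi => (commute_nilFactor (hu.commute k i hi).symm x).symm) y l
  calc descProd u x k (l + 2) * descProd u y k (l + 2)
      = descProd u x (k + 1) (l + 1) * (nilFactor u k x * descProd u y (k + 2) l) *
          nilFactor u (k + 1) y * nilFactor u k y := by
        simp only [descProd_eq_mul_nilFactor, mul_assoc]
    _ = descProd u x (k + 1) (l + 1) * descProd u y (k + 2) l *
          (nilFactor u (k + 1) y * nilFactor u (k + 1) (-y)) * nilFactor u k x *
          nilFactor u (k + 1) y * nilFactor u k y := by
        rw [hcomm.eq, hu.nilFactor_mul_neg, mul_one, mul_assoc _ (descProd u y (k + 2) l)]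
    _ = _ := by
        rw [← hu.nilFactor_conj, descProd_eq_mul_nilFactor u y (k + 1)]
        simp only [mul_assoc]

theorem commute_descProd_descProd (x y : R) (k l : ℕ) :
    Commute (descProd u x k l) (descProd u y k l) := by
  induction l generalizing k with
  | zero => exact Commute.one_right _
  | succ l ih =>
    cases l with
    | zero => simpa [descProd] using
        commute_nilFactor (commute_nilFactor (Commute.refl (u k)) x).symm y
    | succ l =>
      rw [Commute, SemiconjBy, hu.descProd_mul_descProd, hu.descProd_mul_descProd, (ih (k + 1)).eq,
        add_comm x y, mul_comm x y]

theorem descProd_sub (x y : R) (k l : ℕ) :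
    descProd u x k (l + 1) * descProd u y (k + 1) l -
        descProd u y k (l + 1) * descProd u x (k + 1) l =
      (x - y) • (descProd u x k (l + 1) * descProd u y (k + 1) l * u k) := by
  have shift (y : R) : descProd u y (k + 1) l = descProd u y k (l + 1) * nilFactor u k (-y) := by
    rw [descProd_eq_mul_nilFactor, mul_assoc, hu.nilFactor_mul_neg, mul_one]
  have shift_mul : descProd u y (k + 1) l * u k = descProd u y k (l + 1) * u k := by
    rw [descProd_eq_mul_nilFactor, mul_assoc, hu.nilFactor_mul_self]
  rw [mul_assoc _ _ (u k), shift_mul, shift x, shift y, ← mul_assoc, ← mul_assoc, ← mul_assoc,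
    (hu.commute_descProd_descProd y x k _).eq, ← mul_sub, ← mul_smul_comm]
  congr 1
  simp only [nilFactor]
  module

/-- In the `i`-th and `(i+1)`-st blocks, `descProd_sub` produces a factor `u i`, which commutes
past all later blocks. -/
theorem schubertProd_sub {z z' : ℕ → R} {m i k l : ℕ} (him : i < m) (hki : k ≤ i)
    (hil : i + 2 ≤ k + l) (hi : z' i = z (i + 1)) (hi' : z' (i + 1) = z i)
    (hz : ∀ j, j ≠ i → j ≠ i + 1 → z' j = z j) :
    schubertProd u z m k l - schubertProd u z' m k l =
      (z i - z (i + 1)) • (schubertProd u z m k l * u i) := by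
  induction l generalizing k with
  | zero => omega
  | succ l ih =>
    rcases hki.eq_or_lt with rfl | hki
    · obtain ⟨l, rfl⟩ : ∃ l', l = l' + 1 := ⟨l - 1, by omega⟩
      obtain ⟨q, rfl⟩ : ∃ q, m = k + 1 + q := ⟨m - (k + 1), by omega⟩
      have tail_congr := schubertProd_congr u (k + 1 + q) l
        (fun j hj => hz j (by omega) (by omega) : ∀ j, k + 2 ≤ j → z' j = z j)
      have tail_commute := commute_schubertProd (fun j hj => hu.commute k j hj) z (k + 1 + q) l
      simp only [schubertProd, Nat.add_sub_cancel_left, show k + 1 + q - k = q + 1 by omega,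
        hi, hi', tail_congr]
      rw [← mul_assoc, ← mul_assoc, ← sub_mul, hu.descProd_sub, smul_mul_assoc, mul_assoc _ (u k),
        tail_commute.eq, ← mul_assoc]
    · rw [schubertProd, schubertProd, hz k (by omega) (by omega), ← mul_sub,
        ih (by omega) (by omega), mul_smul_comm, mul_assoc]

end NilCoxeter

section Naturality

variable {R' M N : Type*} [CommRing R'] {σ : R →+* R'} [AddCommGroup M] [Module R M]
  [AddCommGroup N] [Module R' N] (Φ : M →ₛₗ[σ] N) {u : ℕ → Module.End R M}
  {v : ℕ → Module.End R' N} (h : ∀ i f, Φ (u i f) = v i (Φ f))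
include h

theorem map_descProd_apply (x : R) (k l : ℕ) (f : M) :
    Φ (descProd u x k l f) = descProd v (σ x) k l (Φ f) := by
  induction l with
  | zero => rfl
  | succ l ih => simp [descProd, nilFactor, h, ih]

theorem map_schubertProd_apply (z : ℕ → R) (m k l : ℕ) (f : M) :
    Φ (schubertProd u z m k l f) = schubertProd v (σ ∘ z) m k l (Φ f) := by
  induction l generalizing k with
  | zero => rfl
  | succ l ih => simp [schubertProd, map_descProd_apply Φ h, ih]

end Naturality

end NilCoxeter

section Operators

open Equiv

variable {n : ℕ} {R : Type*} [CommRing R] {a b : Fin n}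

/-- On functions on the symmetric group, the action of left multiplication by the nilCoxeter
generator of the transposition `swap a b`, for consecutive `a` and `b`: the product `swap a b * v`
survives only if it is longer than `v`, that is if it has a descent at the values `a`, `b`. -/
def leftOp (R : Type*) [CommRing R] (a b : Fin n) : Module.End R (Perm (Fin n) → R) where
  toFun f w := if w.symm b < w.symm a then f (swap a b * w) else 0
  map_add' f g := by ext w; by_cases h : w.symm b < w.symm a <;> simp [h]
  map_smul' c f := by ext w; by_cases h : w.symm b < w.symm a <;> simp [h]

/-- The analogue of `leftOp` for right multiplication by `swap a b`, on positions instead of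
values. -/
def rightOp (R : Type*) [CommRing R] (a b : Fin n) : Module.End R (Perm (Fin n) → R) where
  toFun f w := if w b < w a then f (w * swap a b) else 0
  map_add' f g := by ext w; by_cases h : w b < w a <;> simp [h]
  map_smul' c f := by ext w; by_cases h : w b < w a <;> simp [h]

theorem leftOp_apply (a b : Fin n) (f : Perm (Fin n) → R) (w : Perm (Fin n)) :
    leftOp R a b f w = if w.symm b < w.symm a then f (swap a b * w) else 0 := rfl

theorem rightOp_apply (a b : Fin n) (f : Perm (Fin n) → R) (w : Perm (Fin n)) :
    rightOp R a b f w = if w b < w a then f (w * swap a b) else 0 := rfl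

theorem symm_swap_mul_apply {α : Type*} [DecidableEq α] (a b c : α) (w : Perm α) :
    (swap a b * w).symm c = w.symm (swap a b c) := by
  simp [symm_apply_eq]

theorem symm_mul_swap_apply {α : Type*} [DecidableEq α] (a b c : α) (w : Perm α) :
    (w * swap a b).symm c = swap a b (w.symm c) := by
  simp [symm_apply_eq]

theorem leftOp_mul_self (a b : Fin n) : leftOp R a b * leftOp R a b = 0 := by
  refine LinearMap.ext fun f => funext fun w => ?_
  simp only [Module.End.mul_apply, leftOp_apply, symm_swap_mul_apply, swap_apply_left,
    swap_apply_right]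
  split_ifs with h h'
  · exact absurd h h'.not_gt
  all_goals rfl

theorem commute_leftOp {c d : Fin n} (hac : a ≠ c) (had : a ≠ d) (hbc : b ≠ c) (hbd : b ≠ d) :
    Commute (leftOp R a b) (leftOp R c d) := by
  refine LinearMap.ext fun f => funext fun w => ?_
  have swap_comm : swap c d * swap a b = swap a b * swap c d := by
    ext x
    simp only [Perm.mul_apply, swap_apply_def]
    split_ifs <;> simp_all
  simp only [Module.End.mul_apply, leftOp_apply, symm_swap_mul_apply,
    swap_apply_of_ne_of_ne hac.symm hbc.symm, swap_apply_of_ne_of_ne had.symm hbd.symm,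
    swap_apply_of_ne_of_ne hac had, swap_apply_of_ne_of_ne hbc hbd, ← mul_assoc, swap_comm]
  split_ifs <;> rfl

theorem leftOp_braid {c : Fin n} (hab : a ≠ b) (hac : a ≠ c) (hbc : b ≠ c) :
    leftOp R a b * leftOp R b c * leftOp R a b = leftOp R b c * leftOp R a b * leftOp R b c := by
  refine LinearMap.ext fun f => funext fun w => ?_
  have swap_braid : swap a b * swap b c * swap a b = swap b c * swap a b * swap b c := by
    rw [swap_mul_swap_mul_swap hab hac, swap_comm b c, swap_comm a b,
      swap_mul_swap_mul_swap hbc.symm hac.symm, swap_comm]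
  simp only [Module.End.mul_apply, leftOp_apply, symm_swap_mul_apply, swap_apply_left,
    swap_apply_right, swap_apply_of_ne_of_ne hac.symm hbc.symm, swap_apply_of_ne_of_ne hab hac]
  simp only [← mul_assoc, swap_braid]
  split_ifs <;> rfl

theorem swap_lt_swap_iff {x y : Fin n} (hab : (a : ℕ) + 1 = b) (h : ¬(x = a ∧ y = b))
    (h' : ¬(x = b ∧ y = a)) : swap a b x < swap a b y ↔ x < y := by
  simp only [swap_apply_def]
  split_ifs <;> simp only [Fin.lt_def, Fin.ext_iff] at * <;> omega

/-- If `w` maps the positions `a, b` to the values `c, d`, in either order, then both composites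
vanish at `w`. Otherwise neither swap affects the descent that the other one tests for. -/
theorem commute_rightOp_leftOp {c d : Fin n} (hab : (a : ℕ) + 1 = b) (hcd : (c : ℕ) + 1 = d) :
    Commute (rightOp R a b) (leftOp R c d) := by
  have hab' : a < b := by rw [Fin.lt_def]; omega
  have hcd' : c < d := by rw [Fin.lt_def]; omega
  refine LinearMap.ext fun f => funext fun w => ?_
  simp only [Module.End.mul_apply, leftOp_apply, rightOp_apply, mul_assoc, symm_mul_swap_apply,
    Perm.mul_apply]
  by_cases h_asc : w a = c ∧ w b = d
  · obtain ⟨rfl, rfl⟩ := h_asc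
    simp [hab'.not_gt, hcd'.not_gt]
  by_cases h_desc : w a = d ∧ w b = c
  · obtain ⟨rfl, rfl⟩ := h_desc
    simp [hab'.not_gt, hcd'.not_gt]
  have values := swap_lt_swap_iff (x := w b) (y := w a) hcd (by tauto) (by tauto)
  have positions := swap_lt_swap_iff (x := w.symm d) (y := w.symm c) hab
    (by grind [symm_apply_eq]) (by grind [symm_apply_eq])
  simp only [values, positions]
  split_ifs <;> rfl

theorem leftOp_single_one (hab : a < b) :
    leftOp R a b (Pi.single 1 1) = rightOp R a b (Pi.single 1 1) := by
  funext w
  have left_iff : swap a b * w = 1 ↔ w = swap a b := by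
    rw [mul_eq_one_iff_inv_eq, swap_inv, eq_comm]
  have right_iff : w * swap a b = 1 ↔ w = swap a b := by
    rw [mul_eq_one_iff_eq_inv, swap_inv]
  simp only [leftOp_apply, rightOp_apply, Pi.single_apply, left_iff, right_iff]
  by_cases h : w = swap a b
  · subst h; simp [hab]
  · simp [h]

variable (n R) in
/-- The nilCoxeter generator that multiplies by the transposition of `i` and `i + 1`; it is zero
when `i + 1` is out of range. -/
def nilOp (i : ℕ) : Module.End R (Perm (Fin n) → R) :=
  if h : i + 1 < n then leftOp R ⟨i, by omega⟩ ⟨i + 1, h⟩ else 0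

theorem nilOp_of_succ (hab : (a : ℕ) + 1 = b) : nilOp n R a = leftOp R a b := by
  obtain ⟨b, hb⟩ := b
  obtain rfl : (a : ℕ) + 1 = b := hab
  exact dif_pos hb

variable (n R) in
theorem nilCoxeter_nilOp : NilCoxeter (nilOp n R) where
  sq_eq_zero i := by
    unfold nilOp
    split_ifs
    exacts [leftOp_mul_self _ _, mul_zero 0]
  commute i j hij := by
    unfold nilOp
    split_ifs
    · apply commute_leftOp <;> simp [Fin.ext_iff] <;> omega
    all_goals simp
  braid i := by
    unfold nilOp
    split_ifs
    · apply leftOp_braid <;> simp only [ne_eq, Fin.ext_iff] <;> omega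
    all_goals simp

theorem commute_rightOp_nilOp (hab : (a : ℕ) + 1 = b) (i : ℕ) :
    Commute (rightOp R a b) (nilOp n R i) := by
  unfold nilOp
  split_ifs
  exacts [commute_rightOp_leftOp hab rfl, Commute.zero_right _]

end Operators

section PartialSchubert

open Equiv

variable {n : ℕ} {R : Type*} [CommRing R]

/-- The coefficients, on the symmetric group, of the partial Cauchy product `schubertProd` in the
variables `z k, …, z (k + l - 1)`. For `k = 0` and `l = n` these are the Schubert polynomials. -/
def partialSchubert (n : ℕ) (z : ℕ → R) (k l : ℕ) : Perm (Fin n) → R :=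
  schubertProd (nilOp n R) z (n - 1) k l (Pi.single 1 1)

theorem map_nilOp_apply {R' : Type*} [CommRing R'] (φ : R →+* R') (i : ℕ) (f : Perm (Fin n) → R) :
    φ ∘ nilOp n R i f = nilOp n R' i (φ ∘ f) := by
  unfold nilOp
  funext w
  split_ifs
  · simp [leftOp_apply, apply_ite φ]
  · simp

theorem map_partialSchubert {R' : Type*} [CommRing R'] (φ : R →+* R') (z : ℕ → R) (k l : ℕ)
    (w : Perm (Fin n)) : φ (partialSchubert n z k l w) = partialSchubert n (φ ∘ z) k l w := by
  let Φ : (Perm (Fin n) → R) →ₛₗ[φ] (Perm (Fin n) → R') :=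
    { toFun := fun f => φ ∘ f
      map_add' := fun f g => by ext; simp
      map_smul' := fun c f => by ext; simp }
  have map_single : Φ (Pi.single 1 1) = Pi.single 1 1 := by
    funext v
    simp [Φ, Pi.single_apply, apply_ite φ]
  have := map_schubertProd_apply Φ (map_nilOp_apply φ) z (n - 1) k l (Pi.single 1 1)
  rw [map_single] at this
  exact congrFun this w

theorem sub_mul_partialSchubert {z z' : ℕ → R} {a b : Fin n} (hab : (a : ℕ) + 1 = b)
    (ha : z' a = z b) (hb : z' b = z a) (hz : ∀ j : ℕ, j ≠ a → j ≠ b → z' j = z j)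
    {w : Perm (Fin n)} (hw : w a < w b) :
    (z a - z b) * partialSchubert n z 0 n w =
      partialSchubert n z 0 n (w * swap a b) - partialSchubert n z' 0 n (w * swap a b) := by
  have hlt : a < b := by rw [Fin.lt_def]; omega
  have key := (nilCoxeter_nilOp n R).schubertProd_sub (z := z) (z' := z') (m := n - 1) (i := a)
    (l := n) (by omega) (Nat.zero_le _) (by omega) (by rwa [hab]) (by rwa [hab])
    (fun j hj hj' => hz j hj (by omega))
  have slide : Commute (rightOp R a b) (schubertProd (nilOp n R) z (n - 1) 0 n) :=
    commute_schubertProd (fun i _ => commute_rightOp_nilOp hab i) _ _ _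
  have key_apply := congrFun (LinearMap.congr_fun key (Pi.single 1 1)) (w * swap a b)
  rw [LinearMap.sub_apply, LinearMap.smul_apply, Module.End.mul_apply, nilOp_of_succ hab,
    leftOp_single_one hlt, ← Module.End.mul_apply, ← slide.eq, hab] at key_apply
  simpa [partialSchubert, rightOp_apply, hw, mul_assoc] using key_apply.symm

end PartialSchubert

section Gale

open Finset

variable {n : ℕ} {C D P Q X Y : Finset (Fin n)} {k m : Fin n}

/-- The number of elements of `C` smaller than `t`. The Gale order is the reverse of the pointwise
order of these counting functions, see `galeLE_iff`. -/
def countBelow (C : Finset (Fin n)) (t : ℕ) : ℕ := #{i ∈ C | i.val < t}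

theorem countBelow_eq_sum (C : Finset (Fin n)) (t : ℕ) :
    countBelow C t = ∑ i : Fin n, if i ∈ C ∧ (i : ℕ) < t then 1 else 0 := by
  rw [countBelow, ← card_filter, ← filter_filter, filter_univ_mem]

theorem countBelow_mono (C : Finset (Fin n)) : Monotone (countBelow C) := fun _ _ h =>
  card_le_card <| monotone_filter_right C fun _ _ hi => hi.trans_le h

theorem countBelow_subset (h : C ⊆ D) (t : ℕ) : countBelow C t ≤ countBelow D t :=
  card_le_card (filter_subset_filter _ h)

theorem countBelow_le_card (C : Finset (Fin n)) (t : ℕ) : countBelow C t ≤ #C := card_filter_le _ _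

theorem countBelow_eq_card {t : ℕ} (h : ∀ i ∈ C, (i : ℕ) < t) : countBelow C t = #C := by
  rw [countBelow, filter_true_of_mem h]

theorem countBelow_of_le {t : ℕ} (ht : n ≤ t) : countBelow C t = #C :=
  countBelow_eq_card fun i _ => i.2.trans_le ht

theorem countBelow_eq_zero {t : ℕ} (h : ∀ i ∈ C, t ≤ (i : ℕ)) : countBelow C t = 0 := by
  simpa [countBelow, filter_eq_empty_iff] using h

theorem countBelow_pos {t : ℕ} : 0 < countBelow C t ↔ ∃ i ∈ C, (i : ℕ) < t := by
  simp [countBelow, card_pos, Finset.Nonempty]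

theorem countBelow_insert (hk : k ∉ C) (t : ℕ) :
    countBelow (insert k C) t = countBelow C t + if (k : ℕ) < t then 1 else 0 := by
  rw [countBelow, filter_insert]
  split_ifs
  · exact card_insert_of_notMem fun h => hk (mem_filter.1 h).1
  · rfl

theorem countBelow_erase_add (hk : k ∈ C) (t : ℕ) :
    (countBelow (C.erase k) t + if (k : ℕ) < t then 1 else 0) = countBelow C t := by
  rw [← countBelow_insert (notMem_erase k C), insert_erase hk]

theorem countBelow_succ_le (C : Finset (Fin n)) (t : ℕ) :
    countBelow C (t + 1) ≤ countBelow C t + 1 := by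
  have subset_insert : (C.filter fun i : Fin n => (i : ℕ) < t + 1).map Fin.valEmbedding ⊆
      insert t ((C.filter fun i : Fin n => (i : ℕ) < t).map Fin.valEmbedding) := by
    intro i
    simp only [mem_map, mem_insert, mem_filter, Fin.valEmbedding_apply]
    rintro ⟨i, ⟨hi, hit⟩, rfl⟩
    rcases Nat.lt_succ_iff_lt_or_eq.1 hit with h | h
    exacts [Or.inr ⟨i, ⟨hi, h⟩, rfl⟩, Or.inl h]
  simpa only [countBelow, card_map] using (card_le_card subset_insert).trans (card_insert_le _ _)

theorem orderIsoOfFin_lt_iff (C : Finset (Fin n)) {k : ℕ} (h : k < #C) (t : ℕ) :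
    ((C.orderIsoOfFin rfl ⟨k, h⟩ : Fin n) : ℕ) < t ↔ k < countBelow C t := by
  set e := C.orderIsoOfFin rfl
  have count_eq : countBelow C t = #{j : Fin #C | ((e j : Fin n) : ℕ) < t} := by
    refine (card_bij (fun j _ => (e j : Fin n)) ?_ ?_ ?_).symm
    · exact fun j hj => mem_filter.2 ⟨(e j).2, (mem_filter.1 hj).2⟩
    · exact fun i _ j _ hij => e.injective (Subtype.ext hij)
    · intro i hi
      obtain ⟨hiC, hit⟩ := mem_filter.1 hi
      exact ⟨e.symm ⟨i, hiC⟩, by simpa using hit, by simp⟩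
  rw [count_eq]
  constructor
  · intro hlt
    have initial : univ.filter (fun j : Fin #C => (j : ℕ) < k + 1) ⊆
        univ.filter fun j => ((e j : Fin n) : ℕ) < t :=
      monotone_filter_right _ fun j _ hj =>
        (Fin.le_def.1 (e.monotone (Fin.le_def.2 (Nat.lt_succ_iff.1 hj)))).trans_lt hlt
    have := card_le_card initial
    rw [Fin.card_filter_val_lt] at this
    omega
  · contrapose!
    intro hle
    have initial : univ.filter (fun j => ((e j : Fin n) : ℕ) < t) ⊆
        univ.filter fun j : Fin #C => (j : ℕ) < k :=
      monotone_filter_right _ fun j _ hj => by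
        by_contra! hkj
        exact hj.not_ge (hle.trans (e.monotone (Fin.le_def.2 hkj) : (e ⟨k, h⟩ : Fin n) ≤ e j))
    have := card_le_card initial
    rw [Fin.card_filter_val_lt] at this
    omega

theorem galeLE_iff : GaleLE C D ↔ #C = #D ∧ ∀ t, countBelow D t ≤ countBelow C t := by
  refine and_congr_right fun hcard => ⟨fun h t => ?_, fun h k hC hD => ?_⟩
  · by_contra! hlt
    have hD : countBelow C t < #D := hlt.trans_le (countBelow_le_card D t)
    have hC : countBelow C t < #C := hcard ▸ hD
    have hle := Fin.le_def.1 (h _ hC hD)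
    have := hle.trans_lt ((orderIsoOfFin_lt_iff D hD t).2 hlt)
    exact lt_irrefl _ ((orderIsoOfFin_lt_iff C hC t).1 this)
  · refine Nat.lt_succ_iff.1 ((orderIsoOfFin_lt_iff C hC _).2 (lt_of_lt_of_le ?_ (h _)))
    exact (orderIsoOfFin_lt_iff D hD _).1 (Nat.lt_succ_self _)

namespace GaleLE

theorem refl (C : Finset (Fin n)) : GaleLE C C := ⟨rfl, fun _ _ _ => le_rfl⟩

theorem countBelow_le (h : GaleLE C D) (t : ℕ) : countBelow D t ≤ countBelow C t :=
  (galeLE_iff.1 h).2 t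

theorem eq_empty (h : GaleLE C ∅) : C = ∅ := card_eq_zero.1 h.1

theorem eq_of_initial {m : ℕ} (h : GaleLE C D) (hD : ∀ i, i ∈ D ↔ (i : ℕ) < m) : C = D := by
  have card_le : #D ≤ #{i ∈ C | i.val < m} := by
    rw [← countBelow_eq_card fun i hi => (hD i).1 hi]
    exact h.countBelow_le m
  have filter_eq : {i ∈ C | i.val < m} = D :=
    eq_of_subset_of_card_le (fun i hi => (hD i).2 (mem_filter.1 hi).2) card_le
  exact (eq_of_subset_of_card_le (filter_eq ▸ filter_subset _ _) h.1.le).symm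

theorem insert_insert (h : GaleLE P Q) (hk : k ∉ P) (hm : m ∉ Q) (hkm : k ≤ m) :
    GaleLE (insert k P) (insert m Q) := by
  refine galeLE_iff.2 ⟨by rw [card_insert_of_notMem hk, card_insert_of_notMem hm, h.1],
    fun t => ?_⟩
  have := h.countBelow_le t
  rw [Fin.le_def] at hkm
  rw [countBelow_insert hk, countBelow_insert hm]
  split_ifs <;> omega

theorem erase_erase (h : GaleLE P Q) (hk : k ∈ P) (hm : m ∈ Q)
    (hlt : ∀ t, (k : ℕ) < t → t ≤ (m : ℕ) → countBelow Q t < countBelow P t) :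
    GaleLE (P.erase k) (Q.erase m) := by
  refine galeLE_iff.2 ⟨by rw [card_erase_of_mem hk, card_erase_of_mem hm, h.1], fun t => ?_⟩
  have hP := countBelow_erase_add hk t
  have hQ := countBelow_erase_add hm t
  have := h.countBelow_le t
  have := hlt t
  split_ifs at hP hQ <;> omega

end GaleLE

/-- The set that agrees with `Y` below `t` and with `X` from `t` on. -/
def splice (Y X : Finset (Fin n)) (t : ℕ) : Finset (Fin n) :=
  {i | if (i : ℕ) < t then i ∈ Y else i ∈ X}

theorem mem_splice {t : ℕ} {i : Fin n} :
    i ∈ splice Y X t ↔ if (i : ℕ) < t then i ∈ Y else i ∈ X := by simp [splice]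

theorem countBelow_splice_of_le {r t : ℕ} (hr : r ≤ t) :
    countBelow (splice Y X t) r = countBelow Y r := by
  simp only [countBelow_eq_sum, mem_splice]
  exact sum_congr rfl fun i _ => by split_ifs <;> grind

theorem countBelow_splice_of_ge {r t : ℕ} (h : countBelow X t = countBelow Y t) (hr : t ≤ r) :
    countBelow (splice Y X t) r = countBelow X r := by
  have : countBelow (splice Y X t) r + countBelow X t = countBelow Y t + countBelow X r := by
    simp only [countBelow_eq_sum, mem_splice, ← sum_add_distrib]
    exact sum_congr rfl fun i _ => by split_ifs <;> grind
  omega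

theorem GaleLE.splice_left {t : ℕ} (h : GaleLE X D) (ht : countBelow X t = countBelow Y t)
    (hY : ∀ r < t, countBelow D r ≤ countBelow Y r) : GaleLE (splice Y X t) D := by
  refine galeLE_iff.2 ⟨?_, fun r => ?_⟩
  · rw [← h.1, ← countBelow_of_le (n.le_add_right t), ← countBelow_of_le (n.le_add_right t),
      countBelow_splice_of_ge ht (Nat.le_add_left t n)]
  · rcases lt_or_ge r t with hr | hr
    · rw [countBelow_splice_of_le hr.le]
      exact hY r hr
    · rw [countBelow_splice_of_ge ht hr]
      exact h.countBelow_le r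

theorem exists_first_crossing {f g : ℕ → ℕ} (hf : Monotone f) (hg : ∀ t, g (t + 1) ≤ g t + 1)
    {k s : ℕ} (hk : g k < f k) (hks : k ≤ s) (hs : f s ≤ g s) :
    ∃ t ≤ s, k < t ∧ f t = g t ∧ ∀ r, k ≤ r → r < t → g r < f r := by
  classical
  have hex : ∃ t, k ≤ t ∧ f t ≤ g t := ⟨s, hks, hs⟩
  obtain ⟨hkt, hle⟩ := Nat.find_spec hex
  set t := Nat.find hex
  have before (r : ℕ) (hkr : k ≤ r) (hrt : r < t) : g r < f r := by
    simpa [hkr] using Nat.find_min hex hrt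
  have hlt : k < t := hkt.lt_of_ne fun h => (h ▸ hk).not_ge hle
  refine ⟨t, Nat.find_min' hex ⟨hks, hs⟩, hlt, hle.antisymm ?_, before⟩
  obtain ⟨q, hq⟩ : ∃ q, t = q + 1 := ⟨t - 1, by omega⟩
  rw [hq] at hle ⊢
  have : f q ≤ f (q + 1) := hf q.le_succ
  have : g q < f q := before q (by omega) (by omega)
  have : g (q + 1) ≤ g q + 1 := hg q
  omega

/-- Swap the parts of `X` and `Y` below the first point `t > k` at which their counting functions
agree. -/
theorem GaleLE.exists_splice {DX DY : Finset (Fin n)} {s : ℕ} (hX : GaleLE X DX)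
    (hY : GaleLE Y DY) (hkX : k ∈ X) (hkY : ∀ i ∈ Y, k < i) (hks : (k : ℕ) < s)
    (hXY : countBelow X s ≤ countBelow Y s)
    (hD : ∀ r ≤ s, countBelow DX r ≤ countBelow DY r) :
    ∃ t, (k : ℕ) < t ∧ GaleLE (splice Y X t) DX ∧ GaleLE (splice X Y t) DY := by
  have hY_zero {r : ℕ} (hr : r ≤ k + 1) : countBelow Y r = 0 :=
    countBelow_eq_zero fun i hi => hr.trans (Fin.lt_def.1 (hkY i hi))
  have start : countBelow Y (k + 1) < countBelow X (k + 1) :=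
    hY_zero le_rfl ▸ countBelow_pos.2 ⟨k, hkX, by omega⟩
  obtain ⟨t, hts, hkt, heq, hlt⟩ :=
    exists_first_crossing (countBelow_mono X) (countBelow_succ_le Y) start hks hXY
  have before (r : ℕ) (hr : r < t) : countBelow Y r ≤ countBelow X r := by
    rcases Nat.lt_or_ge r (k + 1) with h | h
    · rw [hY_zero h.le]; exact Nat.zero_le _
    · exact (hlt r h hr).le
  exact ⟨t, by omega, hX.splice_left heq fun r hr => (hD r (by omega)).trans (hY.countBelow_le r),
    hY.splice_left heq.symm fun r hr => (hY.countBelow_le r).trans (before r hr)⟩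

end Gale

section Diagrams

open Finset

variable {n : ℕ}

/-- A diagram, given by its columns: `C j` is the set of rows of the boxes in column `j`. -/
abbrev Diagram (n : ℕ) := Fin n → Finset (Fin n)

/-- The exponent vector of the monomial `∏ i ∈ P, X i` of a single column. -/
noncomputable def columnWeight (P : Finset (Fin n)) : Fin n →₀ ℕ := ∑ i ∈ P, Finsupp.single i 1

/-- The exponent vector of `xDiagram C`. -/
noncomputable def weight (C : Diagram n) : Fin n →₀ ℕ := ∑ c, columnWeight (C c)

theorem columnWeight_apply (P : Finset (Fin n)) (i : Fin n) :
    columnWeight P i = if i ∈ P then 1 else 0 := by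
  simp [columnWeight, Finsupp.single_apply]

theorem xDiagram_eq_monomial (C : Diagram n) : xDiagram C = monomial (weight C) 1 := by
  simp only [xDiagram, weight, columnWeight, monomial_sum_one, X]

theorem xDiagram_eq_monomial_iff {C : Diagram n} {β : Fin n →₀ ℕ} :
    xDiagram C = monomial β 1 ↔ weight C = β := by
  rw [xDiagram_eq_monomial, (monomial_left_injective one_ne_zero).eq_iff]

/-- The diagram `C` with its columns `a` and `b` replaced by `P` and `Q`. -/
def replaceColumns (C : Diagram n) (a b : Fin n) (P Q : Finset (Fin n)) : Diagram n :=
  Function.update (Function.update C a P) b Q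

/-- Interchange the columns `a` and `b` and insert a box in row `k` of the new column `a`. -/
def insertSwap (k a b : Fin n) (C : Diagram n) : Diagram n :=
  replaceColumns C a b (insert k (C b)) (C a)

/-- Remove the box in row `k` of column `a`, then interchange the columns `a` and `b`. -/
def eraseSwap (k a b : Fin n) (C : Diagram n) : Diagram n :=
  replaceColumns C a b (C b) ((C a).erase k)

variable {C D : Diagram n} {a b c k : Fin n} {P Q : Finset (Fin n)}

theorem replaceColumns_left (hab : a ≠ b) : replaceColumns C a b P Q a = P := by
  simp [replaceColumns, hab]

theorem replaceColumns_right : replaceColumns C a b P Q b = Q := by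
  simp [replaceColumns]

theorem replaceColumns_of_ne (ha : c ≠ a) (hb : c ≠ b) : replaceColumns C a b P Q c = C c := by
  simp [replaceColumns, ha, hb]

theorem replaceColumns_eq_iff (hab : a ≠ b) :
    replaceColumns C a b P Q = D ↔ P = D a ∧ Q = D b ∧ ∀ c, c ≠ a → c ≠ b → C c = D c := by
  constructor
  · rintro rfl
    exact ⟨(replaceColumns_left hab).symm, replaceColumns_right.symm,
      fun c ha hb => (replaceColumns_of_ne ha hb).symm⟩
  · rintro ⟨rfl, rfl, h⟩
    funext c
    by_cases hb : c = b
    · rw [hb, replaceColumns_right]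
    by_cases ha : c = a
    · rw [ha, replaceColumns_left hab]
    · rw [replaceColumns_of_ne ha hb, h c ha hb]

theorem eraseSwap_insertSwap (hab : a ≠ b) (hk : k ∉ C b) :
    eraseSwap k a b (insertSwap k a b C) = C := by
  refine (replaceColumns_eq_iff hab).2 ⟨replaceColumns_right, ?_, fun c ha hb =>
    replaceColumns_of_ne ha hb⟩
  rw [insertSwap, replaceColumns_left hab, erase_insert hk]

theorem weight_replaceColumns (hab : a ≠ b) :
    weight (replaceColumns C a b P Q) + (columnWeight (C a) + columnWeight (C b)) =
      weight C + (columnWeight P + columnWeight Q) := by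
  have split (E : Diagram n) : weight E = columnWeight (E a) + columnWeight (E b) +
      ∑ c ∈ {a, b}ᶜ, columnWeight (E c) := by
    rw [weight, ← sum_add_sum_compl {a, b}, sum_pair hab]
  have others : ∑ c ∈ {a, b}ᶜ, columnWeight (replaceColumns C a b P Q c) =
      ∑ c ∈ {a, b}ᶜ, columnWeight (C c) :=
    sum_congr rfl fun c hc => by
      simp only [mem_compl, mem_insert, mem_singleton, not_or] at hc
      rw [replaceColumns_of_ne hc.1 hc.2]
  rw [split C, split (replaceColumns C a b P Q), others, replaceColumns_left hab,
    replaceColumns_right]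
  abel

theorem weight_insertSwap (hab : a ≠ b) (hk : k ∉ C b) :
    weight (insertSwap k a b C) = weight C + Finsupp.single k 1 := by
  have := weight_replaceColumns (C := C) (P := insert k (C b)) (Q := C a) hab
  have insert_eq : columnWeight (insert k (C b)) = Finsupp.single k 1 + columnWeight (C b) :=
    sum_insert hk
  refine add_right_cancel (this.trans ?_)
  rw [insert_eq]
  abel

theorem weight_eraseSwap_add (hab : a ≠ b) (hk : k ∈ C a) :
    weight (eraseSwap k a b C) + Finsupp.single k 1 = weight C := by
  have := weight_replaceColumns (C := C) (P := C b) (Q := (C a).erase k) hab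
  have erase_eq : Finsupp.single k 1 + columnWeight ((C a).erase k) = columnWeight (C a) :=
    add_sum_erase _ _ hk
  rw [← erase_eq, add_assoc, ← add_assoc, add_comm (columnWeight ((C a).erase k))] at this
  exact add_right_cancel this

theorem columnWeight_splice_add (X Y : Finset (Fin n)) (t : ℕ) :
    columnWeight (splice Y X t) + columnWeight (splice X Y t) =
      columnWeight X + columnWeight Y := by
  ext i
  simp only [Finsupp.add_apply, columnWeight_apply, mem_splice]
  split_ifs <;> rfl

theorem weight_replaceColumns_splice (hab : a ≠ b) (t : ℕ) :
    weight (replaceColumns C a b (splice (C b) (C a) t) (splice (C a) (C b) t)) = weight C := by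
  have := weight_replaceColumns (C := C) (P := splice (C b) (C a) t)
    (Q := splice (C a) (C b) t) hab
  rw [columnWeight_splice_add] at this
  exact add_right_cancel this

end Diagrams

section Admissible

open Finset

variable {n : ℕ} {C D D' : Diagram n} {β : Fin n →₀ ℕ} {a b m : Fin n}

/-- `C ≤ D`, all boxes of `C` lie in the rows from `k` on, and those in row `k` lie in the columns
before `j`. -/
structure IsAdmissible (D : Diagram n) (k j : ℕ) (C : Diagram n) : Prop where
  le : DiagramLE C D
  pos : ∀ c, ∀ i ∈ C c, k < (i : ℕ) ∨ (i : ℕ) = k ∧ (c : ℕ) < j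

/-- Allowing boxes in row `k` of column `j` yields no new admissible diagram of weight `β`. -/
def IsSaturated (D : Diagram n) (k j : ℕ) (β : Fin n →₀ ℕ) : Prop :=
  ∀ E, IsAdmissible D k (j + 1) E → weight E = β → IsAdmissible D k j E

open scoped Classical in
/-- The admissible diagrams of weight `β`. -/
noncomputable def admissible (D : Diagram n) (k j : ℕ) (β : Fin n →₀ ℕ) : Finset (Diagram n) :=
  {C | IsAdmissible D k j C ∧ weight C = β}

theorem mem_admissible {k j : ℕ} :
    C ∈ admissible D k j β ↔ IsAdmissible D k j C ∧ weight C = β := by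
  simp [admissible]

namespace IsAdmissible

theorem mono {k j j' : ℕ} (h : IsAdmissible D k j C) (hj : j ≤ j') : IsAdmissible D k j' C :=
  ⟨h.le, fun c i hi => (h.pos c i hi).imp_right fun hk => ⟨hk.1, hk.2.trans_le hj⟩⟩

theorem notMem {k : Fin n} {j : ℕ} {c : Fin n} (h : IsAdmissible D k j C) (hj : j ≤ c) :
    k ∉ C c := fun hk => by
  have := h.pos c k hk
  omega

theorem of_forall_ne {k j j' : ℕ} (h : IsAdmissible D k j' C)
    (hk : ∀ c : Fin n, j ≤ c → (c : ℕ) < j' → ∀ i ∈ C c, (i : ℕ) ≠ k) : IsAdmissible D k j C := by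
  refine ⟨h.le, fun c i hi => ?_⟩
  have := h.pos c i hi
  have := hk c
  grind

theorem of_eq_empty {k j j' : ℕ} (h : IsAdmissible D k j' C)
    (hD : ∀ c : Fin n, j ≤ c → (c : ℕ) < j' → D c = ∅) : IsAdmissible D k j C :=
  h.of_forall_ne fun c hj hj' i hi => by
    have := h.le c
    rw [hD c hj hj'] at this
    simp [this.eq_empty] at hi

theorem succ_iff {k : ℕ} : IsAdmissible D (k + 1) n C ↔ IsAdmissible D k 0 C := by
  refine ⟨fun h => ⟨h.le, fun c i hi => ?_⟩, fun h => ⟨h.le, fun c i hi => ?_⟩⟩ <;>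
  · have := h.pos c i hi
    omega

theorem zero_iff : IsAdmissible D 0 n C ↔ DiagramLE C D :=
  ⟨le, fun h => ⟨h, fun c i _ => by omega⟩⟩

theorem replaceColumns {k j j' : ℕ} {P Q : Finset (Fin n)} (h : IsAdmissible D k j C) (hab : a ≠ b)
    (hD : ∀ c, c ≠ a → c ≠ b → D' c = D c)
    (hj : ∀ c : Fin n, c ≠ a → c ≠ b → (c : ℕ) < j → (c : ℕ) < j')
    (hP : GaleLE P (D' a)) (hQ : GaleLE Q (D' b))
    (posP : ∀ i ∈ P, k < (i : ℕ) ∨ (i : ℕ) = k ∧ (a : ℕ) < j')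
    (posQ : ∀ i ∈ Q, k < (i : ℕ) ∨ (i : ℕ) = k ∧ (b : ℕ) < j') :
    IsAdmissible D' k j' (replaceColumns C a b P Q) := by
  suffices key : ∀ c, GaleLE (_root_.replaceColumns C a b P Q c) (D' c) ∧
      ∀ i ∈ _root_.replaceColumns C a b P Q c, k < (i : ℕ) ∨ (i : ℕ) = k ∧ (c : ℕ) < j' from
    ⟨fun c => (key c).1, fun c => (key c).2⟩
  intro c
  by_cases hb : c = b
  · rw [hb, replaceColumns_right]
    exact ⟨hQ, posQ⟩
  by_cases ha : c = a
  · rw [ha, replaceColumns_left hab]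
    exact ⟨hP, posP⟩
  · rw [replaceColumns_of_ne ha hb, hD c ha hb]
    exact ⟨h.le c, fun i hi => (h.pos c i hi).imp_right fun hk => ⟨hk.1, hj c ha hb hk.2⟩⟩

theorem insertSwap {k : Fin n} {j : ℕ} (h : IsAdmissible (eraseSwap m a b D) k j C)
    (hab : (a : ℕ) + 1 = b) (haj : (a : ℕ) ≤ j) (hjb : j ≤ b) (hm : m ∈ D a) (hkm : k ≤ m) :
    IsAdmissible D k (j + 1) (insertSwap k a b C) := by
  have hne : a ≠ b := by rintro rfl; omega
  have le_a := h.le a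
  have le_b := h.le b
  rw [eraseSwap, replaceColumns_left hne] at le_a
  rw [eraseSwap, replaceColumns_right] at le_b
  refine h.replaceColumns hne (fun c ha hb => (replaceColumns_of_ne ha hb).symm)
    (fun c _ _ hc => hc.trans (Nat.lt_succ_self j)) ?_ le_a (fun i hi => ?_) (fun i hi => ?_)
  · simpa only [insert_erase hm] using
      le_b.insert_insert (h.notMem hjb) (notMem_erase m (D a)) hkm
  · rcases mem_insert.1 hi with rfl | hi
    · exact Or.inr ⟨rfl, Nat.lt_succ_of_le haj⟩
    · have := h.pos b i hi
      omega
  · have := h.pos a i hi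
    omega

theorem exists_exchange {k : Fin n} {s : ℕ} (h : IsAdmissible D k b C) (hab : (a : ℕ) + 1 = b)
    (hk : k ∈ C a) (hks : (k : ℕ) < s) (hC : countBelow (C a) s ≤ countBelow (C b) s)
    (hD : ∀ r ≤ s, countBelow (D a) r ≤ countBelow (D b) r) :
    ∃ E, IsAdmissible D k (b + 1) E ∧ weight E = weight C ∧ k ∈ E b := by
  have hne : a ≠ b := by rintro rfl; omega
  have row_lt (i : Fin n) (hi : i ∈ C b) : k < i := by
    have := h.pos b i hi
    rw [Fin.lt_def]
    omega
  obtain ⟨t, hkt, hP, hQ⟩ := (h.le a).exists_splice (h.le b) hk row_lt hks hC hD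
  refine ⟨_, h.replaceColumns hne (fun _ _ _ => rfl) (fun c _ _ hc => by omega) hP hQ ?_ ?_,
    weight_replaceColumns_splice hne t, ?_⟩
  · intro i hi
    rw [mem_splice] at hi
    have := h.pos a i
    have := h.pos b i
    grind
  · intro i hi
    rw [mem_splice] at hi
    have := h.pos a i
    have := h.pos b i
    grind
  · rw [replaceColumns_right, mem_splice, if_pos hkt]
    exact hk

end IsAdmissible

theorem isSaturated_of_le {k j : ℕ} (hj : n ≤ j) : IsSaturated D k j β := fun _ hE _ =>
  hE.of_forall_ne fun c hc => absurd hc (by omega)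

theorem exists_isAdmissible_mem_of_not_isSaturated {k : Fin n} (h : ¬IsSaturated D k a β) :
    ∃ C, IsAdmissible D k (a + 1) C ∧ weight C = β ∧ k ∈ C a := by
  simp only [IsSaturated, not_forall] at h
  obtain ⟨C, hC, hβ, hnot⟩ := h
  refine ⟨C, hC, hβ, by_contra fun hk => hnot (hC.of_forall_ne fun c hc hc' i hi hik => hk ?_)⟩
  obtain rfl : c = a := Fin.ext (by omega)
  exact Fin.ext hik ▸ hi

namespace IsSaturated

variable {k : Fin n}

theorem countBelow_lt {s : ℕ} (hβ : IsSaturated D k b (weight C)) (h : IsAdmissible D k b C)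
    (hab : (a : ℕ) + 1 = b) (hk : k ∈ C a) (hks : (k : ℕ) < s)
    (hD : ∀ r ≤ s, countBelow (D a) r ≤ countBelow (D b) r) :
    countBelow (C b) s < countBelow (C a) s := by
  by_contra! hC
  obtain ⟨E, hE, hweight, hkE⟩ := h.exists_exchange hab hk hks hC hD
  exact (hβ E hE hweight).notMem le_rfl hkE

theorem isAdmissible_eraseSwap (hβ : IsSaturated D k b (weight C)) (h : IsAdmissible D k b C)
    (hab : (a : ℕ) + 1 = b) (hk : k ∈ C a) (hm : m ∈ D a)
    (hD : ∀ r ≤ (m : ℕ), countBelow (D a) r ≤ countBelow (D b) r) :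
    IsAdmissible (eraseSwap m a b D) k a (eraseSwap k a b C) := by
  have hne : a ≠ b := by rintro rfl; omega
  have gale_erase : GaleLE ((C a).erase k) ((D a).erase m) :=
    (h.le a).erase_erase hk hm fun t hkt htm =>
      calc countBelow (D a) t ≤ countBelow (D b) t := hD t htm
        _ ≤ countBelow (C b) t := (h.le b).countBelow_le t
        _ < countBelow (C a) t :=
          hβ.countBelow_lt h hab hk hkt fun r hr => hD r (hr.trans htm)
  refine h.replaceColumns hne (fun c ha hb => replaceColumns_of_ne ha hb) (fun c ha _ hc => ?_)
    ?_ ?_ (fun i hi => ?_) (fun i hi => ?_)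
  · have := Fin.val_ne_of_ne ha
    omega
  · rw [eraseSwap, replaceColumns_left hne]
    exact h.le b
  · rw [eraseSwap, replaceColumns_right]
    exact gale_erase
  · have := h.pos b i hi
    omega
  · have := h.pos a i (mem_of_mem_erase hi)
    have := Fin.val_ne_of_ne (ne_of_mem_erase hi)
    omega

theorem eraseSwap (hβ : IsSaturated D k b (β + Finsupp.single k 1)) (hab : (a : ℕ) + 1 = b)
    (hm : m ∈ D a) (hkm : k ≤ m) : IsSaturated (eraseSwap m a b D) k a β := by
  have hne : a ≠ b := by rintro rfl; omega
  by_contra hnot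
  obtain ⟨E, hE, rfl, hk⟩ := exists_isAdmissible_mem_of_not_isSaturated hnot
  have hkb : k ∉ E b := hE.notMem hab.le
  rw [hab] at hE
  have := hβ _ (hE.insertSwap hab (by omega) le_rfl hm hkm) (weight_insertSwap hne hkb)
  refine this.notMem (c := b) le_rfl ?_
  rw [insertSwap, replaceColumns_right]
  exact hk

end IsSaturated

/-- The second summand embeds, via `insertSwap`, as diagrams with a box in row `k` of column `a`. -/
theorem card_admissible_add_card_admissible_eraseSwap_le {k : Fin n} (hab : (a : ℕ) + 1 = b)
    (hm : m ∈ D a) (hkm : k ≤ m) :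
    #(admissible D k a (β + Finsupp.single k 1)) + #(admissible (eraseSwap m a b D) k a β) ≤
      #(admissible D k b (β + Finsupp.single k 1)) := by
  classical
  have hne : a ≠ b := by rintro rfl; omega
  have notMem {C : Diagram n} (hC : C ∈ admissible (eraseSwap m a b D) k a β) : k ∉ C b :=
    (mem_admissible.1 hC).1.notMem (by omega)
  have injOn : Set.InjOn (insertSwap k a b) (admissible (eraseSwap m a b D) k a β) :=
    Set.LeftInvOn.injOn fun C hC => eraseSwap_insertSwap hne (notMem hC)
  rw [← card_image_of_injOn injOn, ← card_union_of_disjoint]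
  · refine card_le_card (union_subset (fun C hC => ?_) (image_subset_iff.2 fun C hC => ?_))
    · obtain ⟨hC, hweight⟩ := mem_admissible.1 hC
      exact mem_admissible.2 ⟨hC.mono (by omega), hweight⟩
    · have hkb := notMem hC
      obtain ⟨hC_adm, rfl⟩ := mem_admissible.1 hC
      exact mem_admissible.2
        ⟨hab ▸ hC_adm.insertSwap hab le_rfl (by omega) hm hkm, weight_insertSwap hne hkb⟩
  · refine disjoint_left.2 fun E hE hE' => ?_
    obtain ⟨C, -, rfl⟩ := mem_image.1 hE'
    refine (mem_admissible.1 hE).1.notMem (c := a) le_rfl ?_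
    rw [insertSwap, replaceColumns_left hne]
    exact mem_insert_self _ _

end Admissible

section Rothe

open Finset Equiv

variable {n : ℕ} {w : Perm (Fin n)} {a b c : Fin n}

theorem mem_rothe {i : Fin n} : i ∈ rothe w c ↔ c < w i ∧ i < w.symm c := by
  simp [rothe]

theorem rothe_one : rothe (1 : Perm (Fin n)) = fun _ => ∅ := by
  funext c
  refine eq_empty_of_forall_notMem fun i hi => ?_
  obtain ⟨hc, hi⟩ := mem_rothe.1 hi
  exact hc.asymm hi

theorem rothe_eq_empty_of_le (hc : n ≤ c + 1) : rothe w c = ∅ := by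
  refine eq_empty_of_forall_notMem fun i hi => ?_
  have := Fin.lt_def.1 (mem_rothe.1 hi).1
  omega

theorem symm_mem_rothe (hab : a < b) (hdesc : w.symm b < w.symm a) : w.symm b ∈ rothe w a :=
  mem_rothe.2 ⟨by rwa [apply_symm_apply], hdesc⟩

theorem rothe_swap_mul (hab : (a : ℕ) + 1 = b) (hdesc : w.symm b < w.symm a) :
    rothe (swap a b * w) = eraseSwap (w.symm b) a b (rothe w) := by
  have hne : a ≠ b := by rintro rfl; omega
  refine ((replaceColumns_eq_iff hne).2 ⟨?_, ?_, fun c ha hb => ?_⟩).symm <;> ext i <;>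
    simp only [mem_erase, mem_rothe, symm_swap_mul_apply, Perm.mul_apply, swap_apply_left,
      swap_apply_right] <;>
    have at_a : i = w.symm a ↔ w i = a := eq_symm_apply w <;>
    have at_b : i = w.symm b ↔ w i = b := eq_symm_apply w
  · rw [swap_apply_def]
    split_ifs <;> simp only [Fin.lt_def, Fin.ext_iff] at * <;> omega
  · rw [swap_apply_def]
    split_ifs <;> simp only [Fin.lt_def, Fin.ext_iff, ne_eq] at * <;> omega
  · rw [swap_apply_of_ne_of_ne ha hb, swap_apply_def]
    split_ifs <;> simp only [Fin.lt_def, Fin.ext_iff] at * <;> omega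

theorem mem_rothe_of_mem_rothe (hab : (a : ℕ) + 1 = b) {i : Fin n} (hi : i ∈ rothe w a)
    (hib : i < w.symm b) : i ∈ rothe w b := by
  refine mem_rothe.2 ⟨?_, hib⟩
  have := (eq_symm_apply w).not.1 hib.ne
  have := (mem_rothe.1 hi).1
  simp only [Fin.lt_def, Fin.ext_iff] at *
  omega

theorem rothe_subset_rothe (hab : (a : ℕ) + 1 = b) (hasc : w.symm a < w.symm b) :
    rothe w a ⊆ rothe w b := fun _ hi =>
  mem_rothe_of_mem_rothe hab hi ((mem_rothe.1 hi).2.trans hasc)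

theorem countBelow_rothe_le (hab : (a : ℕ) + 1 = b) {r : ℕ} (hr : r ≤ w.symm b) :
    countBelow (rothe w a) r ≤ countBelow (rothe w b) r :=
  card_le_card fun i hi => by
    obtain ⟨hia, hir⟩ := mem_filter.1 hi
    exact mem_filter.2 ⟨mem_rothe_of_mem_rothe hab hia (hir.trans_le hr), hir⟩

/-- `w` fixes the first `k` points, so that it lies in the parabolic subgroup generated by the
simple transpositions of index at least `k`. -/
def FixesBelow (k : ℕ) (w : Perm (Fin n)) : Prop := ∀ i : Fin n, (i : ℕ) < k → w i = i

namespace FixesBelow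

theorem mono {k l : ℕ} (hw : FixesBelow l w) (hkl : k ≤ l) : FixesBelow k w :=
  fun i hi => hw i (hi.trans_le hkl)

theorem eq_one (hw : FixesBelow n w) : w = 1 := Perm.ext fun i => hw i i.2

theorem le_symm {k : ℕ} (hw : FixesBelow k w) {i : Fin n} (hi : k ≤ i) : k ≤ w.symm i := by
  by_contra! hlt
  have := hw _ hlt
  rw [apply_symm_apply] at this
  rw [← this] at hlt
  omega

theorem le_apply {k : ℕ} (hw : FixesBelow k w) {i : Fin n} (hi : k ≤ i) : k ≤ w i := by
  by_contra! hlt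
  have := w.injective (hw _ hlt)
  rw [this] at hlt
  omega

theorem swap_mul {k : ℕ} (hw : FixesBelow k w) (ha : k ≤ a) (hb : k ≤ b) :
    FixesBelow k (swap a b * w) := fun i hi => by
  rw [Perm.mul_apply, hw i hi]
  exact swap_apply_of_ne_of_ne (by rintro rfl; omega) (by rintro rfl; omega)

theorem swap_mul_iff {k : ℕ} (ha : k ≤ a) (hb : k ≤ b) :
    FixesBelow k (swap a b * w) ↔ FixesBelow k w :=
  ⟨fun hw => by simpa [← mul_assoc] using hw.swap_mul ha hb, fun hw => hw.swap_mul ha hb⟩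

theorem rothe_eq_empty {k : ℕ} (hw : FixesBelow k w) (hc : c < k) : rothe w c = ∅ := by
  refine eq_empty_of_forall_notMem fun i hi => ?_
  obtain ⟨hci, hic⟩ := mem_rothe.1 hi
  rw [(symm_apply_eq w).2 (hw c hc).symm] at hic
  rw [hw i (by omega)] at hci
  exact hci.asymm hic

/-- If `w` moves `k`, then `D(w)` has a box in row `k` and column `k`, which forces every diagram
below `D(w)` to have a box in that column in some row up to `k`. -/
theorem succ_of_isAdmissible {k : Fin n} {C : Diagram n} (hw : FixesBelow k w)
    (hC : IsAdmissible (rothe w) k k C) : FixesBelow (k + 1) w := by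
  have fixed : w k = k := by
    by_contra hne
    have hne' : k ≠ w.symm k := fun h => hne ((eq_symm_apply w).1 h)
    have mem : k ∈ rothe w k := mem_rothe.2
      ⟨(Fin.le_def.2 (hw.le_apply le_rfl)).lt_of_ne' hne,
        (Fin.le_def.2 (hw.le_symm le_rfl)).lt_of_ne hne'⟩
    have count_pos : 0 < countBelow (C k) (k + 1) :=
      (countBelow_pos.2 ⟨k, mem, Nat.lt_succ_self _⟩).trans_le ((hC.le k).countBelow_le _)
    obtain ⟨i, hi, hik⟩ := countBelow_pos.1 count_pos
    have := hC.pos k i hi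
    omega
  intro i hi
  rcases Nat.lt_succ_iff_lt_or_eq.1 hi with h | h
  · exact hw i h
  · rw [Fin.ext h, fixed]

end FixesBelow

end Rothe

section CoeffBounds

open Finset Equiv

variable {n : ℕ} {f : Perm (Fin n) → MvPolynomial (Fin n) ℤ} {w : Perm (Fin n)} {a b : Fin n}

/-- The bounds on coefficients that persist while the factors `h_i(x_k)` are applied to the family
`f` in the order of decreasing `k` and, for each `k`, of increasing `i`. Here `j` is the next index
`i`. -/
structure CoeffBounds (f : Perm (Fin n) → MvPolynomial (Fin n) ℤ) (k j : ℕ) : Prop where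
  nonneg : ∀ w β, 0 ≤ coeff β (f w)
  eq_zero : ∀ w, ¬FixesBelow k w → f w = 0
  le_card : ∀ w β, coeff β (f w) ≤ #(admissible (rothe w) k j β)
  one_le : ∀ w C, FixesBelow k w → IsAdmissible (rothe w) k j C →
    IsSaturated (rothe w) k j (weight C) → 1 ≤ coeff (weight C) (f w)

theorem card_admissible_le {D : Diagram n} {k j k' j' : ℕ} {β : Fin n →₀ ℕ}
    (h : ∀ C, IsAdmissible D k j C → IsAdmissible D k' j' C) :
    #(admissible D k j β) ≤ #(admissible D k' j' β) :=
  card_le_card fun C hC =>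
    mem_admissible.2 ((mem_admissible.1 hC).imp_left (h C))

theorem coeffBounds_single_one :
    CoeffBounds (Pi.single 1 1 : Perm (Fin n) → MvPolynomial (Fin n) ℤ) n n := by
  have weight_empty : weight (fun _ : Fin n => ∅) = 0 := by simp [weight, columnWeight]
  refine ⟨fun w β => ?_, fun w hw => ?_, fun w β => ?_, fun w C hw hC _ => ?_⟩
  · rw [Pi.single_apply]
    split_ifs
    · rw [coeff_one]
      split_ifs <;> simp
    · simp
  · exact Pi.single_eq_of_ne (by rintro rfl; exact hw fun _ _ => rfl) _
  · by_cases h : w = 1 ∧ β = 0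
    · obtain ⟨rfl, rfl⟩ := h
      have mem : (fun _ => ∅) ∈ admissible (rothe (1 : Perm (Fin n))) n n 0 :=
        mem_admissible.2 ⟨⟨fun _ => rothe_one ▸ GaleLE.refl _, by simp⟩, weight_empty⟩
      simpa using card_pos.2 ⟨_, mem⟩
    · rw [not_and_or] at h
      rcases h with h | h <;> simp [Pi.single_apply, apply_ite, coeff_one, h, Ne.symm h]
  · obtain rfl := hw.eq_one
    obtain rfl : C = fun _ => ∅ := by
      funext c
      have := hC.le c
      rw [rothe_one] at this
      exact this.eq_empty
    simp [weight_empty]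

/-- The action of the factor `h_a(x_k)` on families of polynomials. -/
noncomputable def applyFactor (k a : Fin n) (f : Perm (Fin n) → MvPolynomial (Fin n) ℤ) :
    Perm (Fin n) → MvPolynomial (Fin n) ℤ :=
  nilFactor (nilOp n (MvPolynomial (Fin n) ℤ)) a (X k : MvPolynomial (Fin n) ℤ) f

theorem applyFactor_of_descent (hab : (a : ℕ) + 1 = b) (hdesc : w.symm b < w.symm a) (k : Fin n) :
    applyFactor k a f w = f w + X k * f (swap a b * w) := by
  simp [applyFactor, nilFactor, nilOp_of_succ hab, leftOp_apply, hdesc]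

theorem applyFactor_of_not_descent (hab : (a : ℕ) + 1 = b) (hasc : ¬w.symm b < w.symm a)
    (k : Fin n) : applyFactor k a f w = f w := by
  simp [applyFactor, nilFactor, nilOp_of_succ hab, leftOp_apply, hasc]

theorem coeff_add_single_X_mul (k : Fin n) (γ : Fin n →₀ ℕ) (p : MvPolynomial (Fin n) ℤ) :
    coeff (γ + Finsupp.single k 1) (X k * p) = coeff γ p := by
  rw [add_comm, coeff_X_mul]

namespace CoeffBounds

variable {k : Fin n}

theorem of_succ (h : CoeffBounds f (k + 1) n) : CoeffBounds f k k where
  nonneg := h.nonneg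
  eq_zero w hw := h.eq_zero w fun hw' => hw (hw'.mono k.1.le_succ)
  le_card w β := (h.le_card w β).trans <| Nat.cast_le.2 <| card_admissible_le fun _ hC =>
    (IsAdmissible.succ_iff.1 hC).mono (Nat.zero_le _)
  one_le w C hw hC _ := by
    have hC' : IsAdmissible (rothe w) k 0 C :=
      hC.of_eq_empty fun c _ hc => hw.rothe_eq_empty hc
    exact h.one_le w C (hw.succ_of_isAdmissible hC) (IsAdmissible.succ_iff.2 hC')
      (isSaturated_of_le le_rfl)

theorem of_pred {k : ℕ} (h : CoeffBounds f k (n - 1)) : CoeffBounds f k n where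
  nonneg := h.nonneg
  eq_zero := h.eq_zero
  le_card w β := (h.le_card w β).trans <| Nat.cast_le.2 <| card_admissible_le fun _ hC =>
    hC.mono n.pred_le
  one_le w C hw hC _ := by
    have last_empty {j : ℕ} (E : Diagram n) (hE : IsAdmissible (rothe w) k j E) :
        IsAdmissible (rothe w) k (n - 1) E :=
      hE.of_eq_empty fun _ hc _ => rothe_eq_empty_of_le (by omega)
    exact h.one_le w C hw (last_empty C hC) fun E hE _ => last_empty E hE

section Step

variable (hab : (a : ℕ) + 1 = b) (hka : k ≤ a) (h : CoeffBounds f k a)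
include hab

theorem coeff_le_coeff_applyFactor (h : CoeffBounds f k a) (w : Perm (Fin n)) (β : Fin n →₀ ℕ) :
    coeff β (f w) ≤ coeff β (applyFactor k a f w) := by
  by_cases hdesc : w.symm b < w.symm a
  · rw [applyFactor_of_descent hab hdesc, coeff_add, coeff_X_mul', le_add_iff_nonneg_right]
    split_ifs
    exacts [h.nonneg _ _, le_rfl]
  · rw [applyFactor_of_not_descent hab hdesc]

include hka h

theorem applyFactor_eq_zero (hw : ¬FixesBelow k w) : applyFactor k a f w = 0 := by
  by_cases hdesc : w.symm b < w.symm a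
  · rw [applyFactor_of_descent hab hdesc, h.eq_zero w hw, h.eq_zero, mul_zero, add_zero]
    rwa [FixesBelow.swap_mul_iff hka (by omega)]
  · rw [applyFactor_of_not_descent hab hdesc, h.eq_zero w hw]

theorem applyFactor_le_card (w : Perm (Fin n)) (β : Fin n →₀ ℕ) :
    coeff β (applyFactor k a f w) ≤ #(admissible (rothe w) k b β) := by
  have old_le : coeff β (f w) ≤ #(admissible (rothe w) k b β) :=
    (h.le_card w β).trans <| Nat.cast_le.2 <| card_admissible_le fun _ hC => hC.mono (by omega)
  by_cases hw : FixesBelow k w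
  swap
  · rw [h.applyFactor_eq_zero hab hka hw, coeff_zero]
    exact Nat.cast_nonneg _
  by_cases hdesc : w.symm b < w.symm a
  swap
  · rwa [applyFactor_of_not_descent hab hdesc]
  rw [applyFactor_of_descent hab hdesc, coeff_add]
  by_cases hβ : k ∈ β.support
  swap
  · rwa [coeff_X_mul', if_neg hβ, add_zero]
  obtain ⟨γ, rfl⟩ : ∃ γ, β = γ + Finsupp.single k 1 :=
    ⟨_, (tsub_add_cancel_of_le (Finsupp.single_le_iff.2
      (Nat.one_le_iff_ne_zero.2 (Finsupp.mem_support_iff.1 hβ)))).symm⟩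
  rw [coeff_add_single_X_mul]
  have new_le := h.le_card (swap a b * w) γ
  rw [rothe_swap_mul hab hdesc] at new_le
  have card_le := card_admissible_add_card_admissible_eraseSwap_le (β := γ) hab
    (symm_mem_rothe (by omega) hdesc) (k := k) (hw.le_symm (by omega))
  have := h.le_card w (γ + Finsupp.single k 1)
  omega

/-- If no admissible diagram of the given weight has a box in row `k` of column `a`, then the old
coefficient is already positive. If one does, saturation rules out an exchange of its columns `a`
and `b`, so that `w` has a descent there and `eraseSwap` yields an admissible diagram for
`swap a b * w`. -/
theorem one_le_applyFactor {C : Diagram n} (hw : FixesBelow k w)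
    (hC : IsAdmissible (rothe w) k b C) (hsat : IsSaturated (rothe w) k b (weight C)) :
    1 ≤ coeff (weight C) (applyFactor k a f w) := by
  have hne : a ≠ b := by rintro rfl; omega
  by_cases old_sat : IsSaturated (rothe w) k a (weight C)
  · exact (h.one_le w C hw (old_sat C (hab ▸ hC) rfl) old_sat).trans
      (h.coeff_le_coeff_applyFactor hab w _)
  obtain ⟨E, hE, hweight, hkE⟩ := exists_isAdmissible_mem_of_not_isSaturated old_sat
  rw [hab] at hE
  rw [← hweight] at hsat ⊢
  have hdesc : w.symm b < w.symm a := by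
    by_contra! hasc
    have hsub : rothe w a ⊆ rothe w b :=
      rothe_subset_rothe hab (hasc.lt_of_ne (w.symm.injective.ne hne))
    have := hsat.countBelow_lt hE hab hkE k.2 fun r _ => countBelow_subset hsub r
    rw [countBelow_of_le le_rfl, countBelow_of_le le_rfl, (hE.le a).1, (hE.le b).1] at this
    exact this.not_ge (card_le_card hsub)
  have hm : w.symm b ∈ rothe w a := symm_mem_rothe (by omega) hdesc
  have hkm : k ≤ w.symm b := hw.le_symm (by omega)
  have hE' := hsat.isAdmissible_eraseSwap hE hab hkE hm fun r hr => countBelow_rothe_le hab hr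
  rw [← weight_eraseSwap_add hne hkE] at hsat ⊢
  have hsat' := hsat.eraseSwap hab hm hkm
  rw [← rothe_swap_mul hab hdesc] at hE' hsat'
  have new_pos := h.one_le _ _ (hw.swap_mul (by omega) (by omega)) hE' hsat'
  rw [applyFactor_of_descent hab hdesc, coeff_add, coeff_add_single_X_mul]
  have := h.nonneg w (weight (eraseSwap k a b E) + Finsupp.single k 1)
  omega

theorem applyFactor : CoeffBounds (_root_.applyFactor k a f) k b where
  nonneg w β := (h.nonneg w β).trans (h.coeff_le_coeff_applyFactor hab w β)
  eq_zero _ := h.applyFactor_eq_zero hab hka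
  le_card := h.applyFactor_le_card hab hka
  one_le _ _ := h.one_le_applyFactor hab hka

end Step

end CoeffBounds

end CoeffBounds

section SchubertFamily

open Finset Equiv

variable {n : ℕ} {w : Perm (Fin n)}

/-- The variables `X 0, …, X (n - 1)`, continued by zero so as to be indexed by `ℕ`. -/
noncomputable def natX (n i : ℕ) : MvPolynomial (Fin n) ℤ := if h : i < n then X ⟨i, h⟩ else 0

theorem natX_val (i : Fin n) : natX n i = X i := dif_pos i.2

theorem natX_eq_zero {i : ℕ} (hi : n ≤ i) : natX n i = 0 := dif_neg hi.not_gt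

theorem CoeffBounds.descProd {f : Perm (Fin n) → MvPolynomial (Fin n) ℤ} {k : Fin n}
    (h : CoeffBounds f k k) {l : ℕ} (hl : k + l < n) :
    CoeffBounds (descProd (nilOp n (MvPolynomial (Fin n) ℤ)) (natX n k) k l f) k
      (k + l : ℕ) := by
  induction l with
  | zero => exact h
  | succ l ih =>
    have := (ih (by omega)).applyFactor (a := ⟨k + l, by omega⟩) (b := ⟨k + l + 1, hl⟩) rfl
      (Nat.le_add_right _ _)
    rwa [_root_.applyFactor, ← natX_val] at this

theorem coeffBounds_partialSchubert {k l : ℕ} (hkl : k + l = n) :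
    CoeffBounds (partialSchubert n (natX n) k l) k n := by
  induction l generalizing k with
  | zero =>
    obtain rfl : k = n := hkl
    exact coeffBounds_single_one
  | succ l ih =>
    have hk : k < n := by omega
    have hk_pred : k + (n - 1 - k) = n - 1 := by omega
    have start : CoeffBounds (partialSchubert n (natX n) (k + 1) l) k k :=
      (ih (k := k + 1) (by omega)).of_succ (k := ⟨k, hk⟩)
    have block := start.descProd (k := ⟨k, hk⟩) (l := n - 1 - k) (hk_pred.trans_lt (by omega))
    rw [hk_pred] at block
    exact block.of_pred

theorem coeff_partialSchubert_le (w : Perm (Fin n)) (β : Fin n →₀ ℕ) :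
    coeff β (partialSchubert n (natX n) 0 n w) ≤ #(admissible (rothe w) 0 n β) :=
  (coeffBounds_partialSchubert (zero_add n)).le_card w β

theorem one_le_coeff_partialSchubert {C : Diagram n} (hC : DiagramLE C (rothe w)) :
    1 ≤ coeff (weight C) (partialSchubert n (natX n) 0 n w) :=
  (coeffBounds_partialSchubert (zero_add n)).one_le w C (fun _ hi => absurd hi (Nat.not_lt_zero _))
    (IsAdmissible.zero_iff.2 hC) (isSaturated_of_le le_rfl)

theorem partialSchubert_eq_xDiagram (hw : ∀ C, DiagramLE C (rothe w) → C = rothe w) :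
    partialSchubert n (natX n) 0 n w = xDiagram (rothe w) := by
  ext β
  have upper := coeff_partialSchubert_le w β
  rw [xDiagram_eq_monomial, coeff_monomial]
  split_ifs with hβ
  · subst hβ
    have card_le_one : #(admissible (rothe w) 0 n (weight (rothe w))) ≤ 1 :=
      card_le_one.2 fun C hC E hE => (hw C (mem_admissible.1 hC).1.le).trans
        (hw E (mem_admissible.1 hE).1.le).symm
    have lower := one_le_coeff_partialSchubert (w := w) fun c => GaleLE.refl (rothe w c)
    omega
  · have admissible_eq : admissible (rothe w) 0 n β = ∅ :=
      eq_empty_of_forall_notMem fun C hC => hβ <| by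
        obtain ⟨hC_adm, rfl⟩ := mem_admissible.1 hC
        rw [hw C hC_adm.le]
    rw [admissible_eq, card_empty] at upper
    exact le_antisymm upper ((coeffBounds_partialSchubert (zero_add n)).nonneg w β)

theorem mem_rothe_revPerm {i j : Fin n} : i ∈ rothe Fin.revPerm j ↔ (i : ℕ) < n - 1 - j := by
  rw [mem_rothe, Fin.revPerm_symm, Fin.revPerm_apply, Fin.revPerm_apply, Fin.lt_def, Fin.lt_def,
    Fin.val_rev, Fin.val_rev]
  omega

theorem xDiagram_rothe_revPerm :
    xDiagram (rothe (Fin.revPerm : Perm (Fin n))) = ∏ i : Fin n, X i ^ (n - 1 - (i : ℕ)) := by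
  rw [xDiagram, prod_comm' (t' := (univ : Finset (Fin n)))
    (s' := fun i => ({j | (j : ℕ) < n - 1 - i} : Finset (Fin n)))]
  · refine prod_congr rfl fun i _ => ?_
    rw [prod_const, Fin.card_filter_val_lt]
    congr 1
    omega
  · intro j i
    simp only [mem_univ, true_and, and_true, mem_rothe_revPerm, mem_filter]
    omega

theorem rename_swap_natX {a b : Fin n} {j : ℕ} (ha : j ≠ a) (hb : j ≠ b) :
    rename (swap a b) (natX n j) = natX n j := by
  rcases lt_or_ge j n with hj | hj
  · rw [natX, dif_pos hj, rename_X,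
      swap_apply_of_ne_of_ne (fun h => ha (by rw [← h])) (fun h => hb (by rw [← h]))]
  · rw [natX_eq_zero hj, map_zero]

theorem isSchubertFamily_partialSchubert :
    IsSchubertFamily (partialSchubert n (natX n) 0 n) := by
  refine ⟨?_, fun w a b hab hw => ?_⟩
  · rw [← xDiagram_rothe_revPerm]
    exact partialSchubert_eq_xDiagram fun C hC => funext fun j =>
      (hC j).eq_of_initial fun i => mem_rothe_revPerm
  · let φ : MvPolynomial (Fin n) ℤ →+* MvPolynomial (Fin n) ℤ := (rename (swap a b)).toRingHom
    have φ_apply (p) : φ p = rename (swap a b) p := rfl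
    have key := sub_mul_partialSchubert (z := natX n) (z' := φ ∘ natX n) hab
      (by simp [φ_apply, natX_val]) (by simp [φ_apply, natX_val])
      (fun j ha hb => rename_swap_natX ha hb) hw
    rwa [← map_partialSchubert, natX_val, natX_val] at key

theorem eq_revPerm_of_forall_le (h : ∀ a b : Fin n, (a : ℕ) + 1 = b → w b ≤ w a) :
    w = Fin.revPerm := by
  obtain _ | m := n
  · exact Subsingleton.elim _ _
  have anti : StrictAnti w := Fin.strictAnti_iff_succ_lt.2 fun i =>
    (h _ _ rfl).lt_of_ne (w.injective.ne i.castSucc_lt_succ.ne')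
  have comp_rev : w ∘ Fin.rev = id :=
    ((anti.comp Fin.rev_strictAnti).range_inj strictMono_id).1 <| by
      rw [(w.surjective.comp Fin.rev_surjective).range_eq, Set.range_id]
  ext1 i
  simpa using congrFun comp_rev (Fin.rev i)

theorem toLex_lt_toLex_mul_swap {a b : Fin n} (hab : a ≤ b) (hw : w a < w b) :
    toLex (w : Fin n → Fin n) < toLex ⇑(w * swap a b) := by
  have := Pi.lex_desc (f := ⇑(w * swap a b)) hab (by simpa)
  rwa [← Perm.coe_mul, mul_assoc, swap_mul_self, mul_one] at this

theorem IsSchubertFamily.unique {S T : Perm (Fin n) → MvPolynomial (Fin n) ℤ}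
    (hS : IsSchubertFamily S) (hT : IsSchubertFamily T) : S = T := by
  funext w
  induction hv : toLex (w : Fin n → Fin n) using WellFoundedGT.induction generalizing w with
  | _ v ih =>
    subst hv
    by_cases hw : ∃ a b : Fin n, (a : ℕ) + 1 = b ∧ w a < w b
    · obtain ⟨a, b, hab, hlt⟩ := hw
      have a_lt_b : a < b := by rw [Fin.lt_def]; omega
      have ih_swap : S (w * swap a b) = T (w * swap a b) :=
        ih _ (toLex_lt_toLex_mul_swap a_lt_b.le hlt) _ rfl
      have X_sub_X_ne_zero : (X a - X b : MvPolynomial (Fin n) ℤ) ≠ 0 :=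
        sub_ne_zero.2 fun h => a_lt_b.ne (X_injective h)
      refine mul_left_cancel₀ X_sub_X_ne_zero ?_
      rw [hS.2 w a b hab hlt, hT.2 w a b hab hlt, ih_swap]
    · push Not at hw
      rw [eq_revPerm_of_forall_le hw, hS.1, hT.1]

end SchubertFamily

/- **Coefficient bounds for Schubert polynomials**: `Min_w ≤ S_w ≤ Max_w` coefficientwise.
For every exponent `β`: if some diagram `C ≤ D(w)` has `x^C = x^β` then the coefficient of
`x^β` in `S_w` is at least `1`; and the coefficient of `x^β` in `S_w` is at most the number of
diagrams `C ≤ D(w)` with `x^C = x^β`. -/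
open scoped Classical in
theorem schubert_min_le_le_max (n : ℕ) (hn : 1 ≤ n) (w : Equiv.Perm (Fin n))
    (S : Equiv.Perm (Fin n) → MvPolynomial (Fin n) ℤ) (hS : IsSchubertFamily S) :
    ∀ β : Fin n →₀ ℕ,
      ((∃ C : Fin n → Finset (Fin n), DiagramLE C (rothe w) ∧
          xDiagram C = monomial β 1) → 1 ≤ coeff β (S w)) ∧
      coeff β (S w) ≤
        ((Finset.univ.filter (fun C : Fin n → Finset (Fin n) =>
          DiagramLE C (rothe w) ∧ xDiagram C = monomial β 1)).card : ℤ) := by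
  intro β
  rw [hS.unique isSchubertFamily_partialSchubert]
  simp only [xDiagram_eq_monomial_iff]
  constructor
  · rintro ⟨C, hC, rfl⟩
    exact one_le_coeff_partialSchubert hC
  · refine (coeff_partialSchubert_le w β).trans (Nat.cast_le.2 (Finset.card_le_card fun C hC => ?_))
    rw [mem_admissible, IsAdmissible.zero_iff] at hC
    exact Finset.mem_filter.2 ⟨Finset.mem_univ C, hC⟩
end

section
/- Let n ≥ 1 and let α ∈ ℤ_{≥0}^n be a composition avoiding the composition pattern (0,2), i.e., such that there do not exist indices i < j with α_j − α_i ≥ 2. Let D(α) = (D_1,…,D_n) be the skyline diagram of α. For each 1 ≤ j ≤ n, let a_j be the largest integer a ≥ 0 such that {1,…,a} ⊆ D_j, and set D'_j = D_j ∖ {1,…,a_j}. Then for all 1 ≤ j_1 < j_2 ≤ n, the sets D'_{j_1} and D'_{j_2} are disjoint. -/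
/-- The skyline diagram of a composition `α` (0-indexed): column `j` consists of the rows `i`
with `α i ≥ j + 1`, i.e. row `i` contains the first `α i` boxes. -/
def skyline {n : ℕ} (α : Fin n → ℕ) (j : Fin n) : Finset (Fin n) :=
  Finset.univ.filter fun i => (j : ℕ) < α i

/-- `D'_j`: the part of column `D_j` above which there is a gap, i.e. the elements `i ∈ D_j`
such that some `k < i` has `k ∉ D_j`.  (Equivalently, `D_j ∖ [a_j]` where `a_j` is the largest
`a` with `{1,…,a} ⊆ D_j`.) -/
def gapPart {n : ℕ} (D : Finset (Fin n)) : Finset (Fin n) :=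
  D.filter fun i => ∃ k < i, k ∉ D

/-!
If row `i` has a box in `D'_j`, then some earlier row `k` has `α k ≤ j`, so avoidance forces
`α i ≤ α k + 1 ≤ j + 1`: the box in column `j` is the last box of row `i`. A row has only one last
box, so it cannot meet two of the sets `D'_j`.
-/

theorem mem_gapPart_skyline {n : ℕ} {α : Fin n → ℕ} {i j : Fin n} :
    i ∈ gapPart (skyline α j) ↔ (j : ℕ) < α i ∧ ∃ k < i, α k ≤ (j : ℕ) := by
  simp [gapPart, skyline]

theorem eq_succ_of_mem_gapPart_skyline {n : ℕ} {α : Fin n → ℕ} {i j : Fin n}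
    (hα : ∀ k < i, α i ≤ α k + 1) (hi : i ∈ gapPart (skyline α j)) : α i = (j : ℕ) + 1 := by
  obtain ⟨hji, k, hki, hkj⟩ := mem_gapPart_skyline.mp hi
  have hle : α i ≤ (j : ℕ) + 1 := (hα k hki).trans (Nat.succ_le_succ hkj)
  exact hle.antisymm hji

/-- If `α` avoids the composition pattern `(0,2)`, then the sets `D'_{j₁}` and `D'_{j₂}`
coming from distinct columns of the skyline diagram of `α` are disjoint. -/
theorem skyline_gapParts_disjoint (n : ℕ) (hn : 1 ≤ n) (α : Fin n → ℕ)
    (h : ¬ ∃ i j : Fin n, i < j ∧ α i + 2 ≤ α j) :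
    ∀ j₁ j₂ : Fin n, j₁ < j₂ →
      Disjoint (gapPart (skyline α j₁)) (gapPart (skyline α j₂)) := by
  intro j₁ j₂ hj
  rw [Finset.disjoint_left]
  intro i hi₁ hi₂
  have hα : ∀ k < i, α i ≤ α k + 1 := fun k hki =>
    Nat.le_of_lt_succ <| not_le.mp fun hle => h ⟨k, i, hki, hle⟩
  have hcol : (j₁ : ℕ) + 1 = (j₂ : ℕ) + 1 :=
    (eq_succ_of_mem_gapPart_skyline hα hi₁).symm.trans (eq_succ_of_mem_gapPart_skyline hα hi₂)
  exact hj.ne (Fin.ext (Nat.succ_injective hcol))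
end

section
/- Let w be a permutation of [n] containing the pattern 1432. Let i_0 be the largest index i such that there exist i < k < p < q with w_i w_k w_p w_q order isomorphic to 1432; given i_0, let k_0 be the smallest index k such that there exist k < p < q with w_{i_0} w_k w_p w_q order isomorphic to 1432; and let w_{i_0} w_{k_0} w_{p_0} w_{q_0} (i_0 < k_0 < p_0 < q_0) be any subsequence order isomorphic to 1432. Set j_0 = w_{q_0} and l_0 = w_{p_0}. Then: (a) w_{q_0} < w_i < w_{p_0} for every i with i_0 < i < k_0; (b) i_0 ∉ D(w)_{j_0}, and i ∈ D(w)_{j_0} for every i with i_0 < i ≤ k_0; (c) k_0 ∈ D(w)_{l_0}, and i ∉ D(w)_{l_0} for every i with i_0 ≤ i < k_0. -/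
/-!
An entry of the word lying between `i₀` and `k₀` and smaller than `w q₀` could replace the first
letter of the occurrence, contradicting the maximality of `i₀`; one larger than `w p₀` could replace
the second letter, contradicting the minimality of `k₀`. Since a box `(i, w m)` lies in the Rothe
diagram exactly when `(i, m)` is an inversion of `w`, these comparisons decide which boxes lie in
the columns `w q₀` and `w p₀`.
-/

/-- The entries of the word `f` at positions `i < k < p < q` form an occurrence of the pattern 1432.
Positions and values may lie in any ordered types. -/
structure IsOccurrence1432 {ι α : Type*} [LT ι] [LT α] (f : ι → α) (i k p q : ι) : Prop where
  first_lt_second : i < k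
  second_lt_third : k < p
  third_lt_fourth : p < q
  apply_first_lt_fourth : f i < f q
  apply_fourth_lt_third : f q < f p
  apply_third_lt_second : f p < f k

namespace IsOccurrence1432

section Replace

variable {ι α : Type*} [LT ι] [LT α] {f : ι → α} {i j k p q : ι}

theorem replace_first (h : IsOccurrence1432 f i k p q) (hjk : j < k) (hjq : f j < f q) :
    IsOccurrence1432 f j k p q :=
  { h with first_lt_second := hjk, apply_first_lt_fourth := hjq }

theorem replace_second (h : IsOccurrence1432 f i k p q) (hij : i < j) (hjp : j < p)
    (hpj : f p < f j) : IsOccurrence1432 f i j p q :=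
  { h with first_lt_second := hij, second_lt_third := hjp, apply_third_lt_second := hpj }

end Replace

section Extremal

variable {ι α : Type*} [PartialOrder ι] [LinearOrder α] {f : ι → α} {i j k p q : ι}

theorem apply_fourth_lt_of_first_maximal (h : IsOccurrence1432 f i k p q)
    (hf : Function.Injective f) (hmax : ∀ i', IsOccurrence1432 f i' k p q → i' ≤ i)
    (hij : i < j) (hjk : j ≤ k) : f q < f j := by
  rcases hjk.eq_or_lt with rfl | hjk
  · exact h.apply_fourth_lt_third.trans h.apply_third_lt_second
  · have hjq : j < q := hjk.trans (h.second_lt_third.trans h.third_lt_fourth)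
    have hle : f q ≤ f j := not_lt.mp fun hlt => (hmax j (h.replace_first hjk hlt)).not_gt hij
    exact hle.lt_of_ne (hf.ne hjq.ne')

theorem apply_lt_third_of_second_minimal (h : IsOccurrence1432 f i k p q)
    (hf : Function.Injective f) (hmin : ∀ k', IsOccurrence1432 f i k' p q → k ≤ k')
    (hij : i ≤ j) (hjk : j < k) : f j < f p := by
  rcases hij.eq_or_lt with rfl | hij
  · exact h.apply_first_lt_fourth.trans h.apply_fourth_lt_third
  · have hjp : j < p := hjk.trans h.second_lt_third
    have hle : f j ≤ f p :=
      not_lt.mp fun hlt => (hmin j (h.replace_second hij hjp hlt)).not_gt hjk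
    exact hle.lt_of_ne (hf.ne hjp.ne)

end Extremal

end IsOccurrence1432

theorem mem_rothe_apply {n : ℕ} {w : Equiv.Perm (Fin n)} {i m : Fin n} :
    i ∈ rothe w (w m) ↔ w m < w i ∧ i < m := by
  simp [rothe]

theorem rothe_local_configuration_general {n : ℕ} {w : Equiv.Perm (Fin n)} {i₀ k₀ p₀ q₀ : Fin n}
    (h : IsOccurrence1432 w i₀ k₀ p₀ q₀)
    (hmax : ∀ i, IsOccurrence1432 w i k₀ p₀ q₀ → i ≤ i₀)
    (hmin : ∀ k, IsOccurrence1432 w i₀ k p₀ q₀ → k₀ ≤ k) :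
    (∀ i : Fin n, i₀ < i → i < k₀ → w q₀ < w i ∧ w i < w p₀) ∧
    (i₀ ∉ rothe w (w q₀) ∧ ∀ i : Fin n, i₀ < i → i ≤ k₀ → i ∈ rothe w (w q₀)) ∧
    (k₀ ∈ rothe w (w p₀) ∧ ∀ i : Fin n, i₀ ≤ i → i < k₀ → i ∉ rothe w (w p₀)) := by
  have above : ∀ i, i₀ < i → i ≤ k₀ → w q₀ < w i := fun _ =>
    h.apply_fourth_lt_of_first_maximal w.injective hmax
  have below : ∀ i, i₀ ≤ i → i < k₀ → w i < w p₀ := fun _ =>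
    h.apply_lt_third_of_second_minimal w.injective hmin
  have hkq : k₀ < q₀ := h.second_lt_third.trans h.third_lt_fourth
  simp only [mem_rothe_apply]
  refine ⟨fun i hi hk => ⟨above i hi hk.le, below i hi.le hk⟩, ⟨?_, ?_⟩, ?_, ?_⟩
  · exact fun hbox => hbox.1.not_gt h.apply_first_lt_fourth
  · exact fun i hi hk => ⟨above i hi hk, hk.trans_lt hkq⟩
  · exact ⟨h.apply_third_lt_second, h.second_lt_third⟩
  · exact fun i hi hk hbox => hbox.1.not_gt (below i hi hk)

/-- Suppose `w` contains the pattern 1432.  Let `i₀` be the largest index beginning an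
occurrence of 1432, then `k₀` the smallest second index of an occurrence starting at `i₀`,
and let `w_{i₀} w_{k₀} w_{p₀} w_{q₀}` be any occurrence of 1432 (order isomorphism:
`w_{i₀} < w_{q₀} < w_{p₀} < w_{k₀}`).  With `j₀ = w_{q₀}` and `l₀ = w_{p₀}`:
(a) `w_{q₀} < w_i < w_{p₀}` for `i₀ < i < k₀`;
(b) `(i₀, j₀) ∉ D(w)` and `(i, j₀) ∈ D(w)` for `i₀ < i ≤ k₀`;
(c) `(k₀, l₀) ∈ D(w)` and `(i, l₀) ∉ D(w)` for `i₀ ≤ i < k₀`. -/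
theorem rothe_local_configuration (n : ℕ) (w : Equiv.Perm (Fin n))
    (i₀ k₀ p₀ q₀ : Fin n)
    (hik : i₀ < k₀) (hkp : k₀ < p₀) (hpq : p₀ < q₀)
    (hocc : w i₀ < w q₀ ∧ w q₀ < w p₀ ∧ w p₀ < w k₀)
    (hmax : ∀ i k p q : Fin n, i < k → k < p → p < q →
      w i < w q → w q < w p → w p < w k → i ≤ i₀)
    (hmin : ∀ k p q : Fin n, i₀ < k → k < p → p < q →
      w i₀ < w q → w q < w p → w p < w k → k₀ ≤ k) :
    (∀ i : Fin n, i₀ < i → i < k₀ → w q₀ < w i ∧ w i < w p₀) ∧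
    (i₀ ∉ rothe w (w q₀) ∧ ∀ i : Fin n, i₀ < i → i ≤ k₀ → i ∈ rothe w (w q₀)) ∧
    (k₀ ∈ rothe w (w p₀) ∧ ∀ i : Fin n, i₀ ≤ i → i < k₀ → i ∉ rothe w (w p₀)) := by
  obtain ⟨hiq, hqp, hpk⟩ := hocc
  exact rothe_local_configuration_general ⟨hik, hkp, hpq, hiq, hqp, hpk⟩
    (fun i ⟨hik, hkp, hpq, hiq, hqp, hpk⟩ => hmax i k₀ p₀ q₀ hik hkp hpq hiq hqp hpk)
    (fun k ⟨hik, hkp, hpq, hiq, hqp, hpk⟩ => hmin k p₀ q₀ hik hkp hpq hiq hqp hpk)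
end

section
/- Let α = (α_1,…,α_n) ∈ ℤ_{≥0}^n be a composition containing the composition pattern (0,2), i.e., there exist indices i < k with α_k − α_i ≥ 2. Let i_0 be the largest index i such that α_k − α_i ≥ 2 for some k > i, and let k_0 be the smallest index k > i_0 with α_{k_0} − α_{i_0} ≥ 2. Then α_i = α_{i_0} + 1 for every i with i_0 < i < k_0. -/
theorem add_two_eq_succ_succ {M : Type*} [Preorder M] [AddMonoidWithOne M] [SuccAddOrder M]
    (a : M) : a + 2 = Order.succ (Order.succ a) := by
  rw [Order.succ_eq_add_one, Order.succ_eq_add_one, add_assoc, one_add_one_eq_two]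

section LinearOrder

variable {M : Type*} [LinearOrder M] [AddMonoidWithOne M] [SuccAddOrder M] {a b : M}

theorem lt_of_add_two_lt_add_two (h : a + 2 < b + 2) : a < b := by
  rw [add_two_eq_succ_succ a, add_two_eq_succ_succ b] at h
  exact Order.succ_mono.reflect_lt (Order.succ_mono.reflect_lt h)

theorem eq_add_one_of_lt_of_lt_add_two (hab : a < b) (hba : b < a + 2) : b = a + 1 := by
  rw [add_two_eq_succ_succ] at hba
  rw [← Order.succ_eq_add_one]
  exact le_antisymm (Order.le_of_lt_succ hba) (Order.succ_le_of_lt hab)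

end LinearOrder

theorem composition_between_indices_eq_general {ι M : Type*} [Preorder ι] [LinearOrder M]
    [AddMonoidWithOne M] [SuccAddOrder M] {α : ι → M} {i₀ k₀ : ι}
    (hi₀ : IsGreatest {i | ∃ k, i < k ∧ α i + 2 ≤ α k} i₀)
    (hk₀ : IsLeast {k | i₀ < k ∧ α i₀ + 2 ≤ α k} k₀) {i : ι} (hi₀i : i₀ < i) (hik₀ : i < k₀) :
    α i = α i₀ + 1 := by
  have hi_lt : α i < α i₀ + 2 :=
    lt_of_not_ge fun h => hik₀.not_ge (hk₀.2 ⟨hi₀i, h⟩)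
  have hk₀_lt : α k₀ < α i + 2 :=
    lt_of_not_ge fun h => hi₀i.not_ge (hi₀.2 ⟨k₀, hik₀, h⟩)
  have hi₀_lt : α i₀ < α i :=
    lt_of_add_two_lt_add_two (hk₀.1.2.trans_lt hk₀_lt)
  exact eq_add_one_of_lt_of_lt_add_two hi₀_lt hi_lt

/-- Suppose the composition `α` contains the pattern `(0,2)`.  Let `i₀` be the largest index
`i` such that `α k - α i ≥ 2` for some `k > i`, and let `k₀` be the smallest index `k > i₀`
with `α k₀ - α i₀ ≥ 2`.  Then `α i = α i₀ + 1` for every `i` with `i₀ < i < k₀`. -/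
theorem composition_between_indices_eq (n : ℕ) (α : Fin n → ℕ) (i₀ k₀ : Fin n)
    (hik : i₀ < k₀) (h02 : α i₀ + 2 ≤ α k₀)
    (hmax : ∀ i k : Fin n, i < k → α i + 2 ≤ α k → i ≤ i₀)
    (hmin : ∀ k : Fin n, i₀ < k → α i₀ + 2 ≤ α k → k₀ ≤ k) :
    ∀ i : Fin n, i₀ < i → i < k₀ → α i = α i₀ + 1 :=
  fun _ => composition_between_indices_eq_general
    ⟨⟨k₀, hik, h02⟩, fun i ⟨k, hlt, h⟩ => hmax i k hlt h⟩
    ⟨⟨hik, h02⟩, fun k ⟨hlt, h⟩ => hmin k hlt h⟩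
end
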